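/- arXiv:1302.5396 — 2 statements merged into one kernel-verified Lean document; each statement's English description precedes it below -/
import Mathlib

section
/- Let f : {0,1}ⁿ → {0,1}ⁿ be a monotone-stepping Boolean system, let Q : ℝⁿ → [0,1]ⁿ be a continuous conversion of f, and let γ₁,…,γₙ > 0 be fixed. Then there exist μ > 0 and, for each s ∈ {0,1}ⁿ, a nonempty open set U^s ⊆ W^s ∩ [x⁻, x⁺]^{2n} (with W^s ⊆ ℝ^{2n} constraining the first n coordinates) such that for every choice of γ_{n+1},…,γ_{2n} ∈ (0, μ), every solution x of D₂(f,γ,Q) with x(0) ∈ ⋃_{s∈{0,1}ⁿ} U^s is consistent with f: x has the transversality property and its Boolean itinerary s^x satisfies, for every τ ≥ 0: (i) for each i ∈ [n], s^x(τ+1)ᵢ = fᵢ(s^x(τ)) or s^x(τ+1)ᵢ = s^x(τ)ᵢ, and (ii) s^x(τ+1) = s^x(τ) if and only if s^x(τ) is a fixed point of f. -/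
/-- The cubic `g(x) = 3x - x³ - 3`. -/
noncomputable def gcub (x : ℝ) : ℝ := 3 * x - x ^ 3 - 3

/-- The piecewise linear function `L`: `0` for `x ≤ -1`, `(x+1)/2` for
`-1 < x < 1`, and `1` for `x ≥ 1`. -/
noncomputable def Lpl (x : ℝ) : ℝ := if x ≤ -1 then 0 else if x < 1 then (x + 1) / 2 else 1

/-- `W^s ⊆ ℝⁿ`: the set of `x` with `xᵢ < -1` when `sᵢ = 0` and `xᵢ > 1`
when `sᵢ = 1`. -/
def Wset (n : ℕ) (s : Fin n → Bool) : Set (Fin n → ℝ) :=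
  {x | ∀ i, if s i then 1 < x i else x i < -1}

/-- `Q : ℝⁿ → [0,1]ⁿ` is a continuous conversion of the Boolean map `f`. -/
def IsConversion (n : ℕ) (f : (Fin n → Bool) → Fin n → Bool)
    (Q : (Fin n → ℝ) → Fin n → ℝ) : Prop :=
  Continuous Q ∧ (∀ x i, Q x i ∈ Set.Icc (0 : ℝ) 1) ∧
  ∀ s : Fin n → Bool, ∀ x ∈ Wset n s, ∀ i, Q x i = if f s i then 1 else 0

/-- `(x, y) : [0,∞) → ℝⁿ × ℝⁿ` is a solution of the system `D₂(f, γ, Q)`: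
`ẋᵢ = γᵢ (g(xᵢ) + 6 L(yᵢ))` and `ẏᵢ = γ'ᵢ (g(yᵢ) + 6 Qᵢ(x))`, where the
`xᵢ` are the signature variables and the `yᵢ = x_{n+i}` the signaling ones. -/
def IsSolD2 (n : ℕ) (γ γ' : Fin n → ℝ) (Q : (Fin n → ℝ) → Fin n → ℝ)
    (x y : ℝ → Fin n → ℝ) : Prop :=
  ∀ i : Fin n, ∀ t : ℝ, 0 ≤ t →
    HasDerivAt (fun u => x u i) (γ i * (gcub (x t i) + 6 * Lpl (y t i))) t ∧
    HasDerivAt (fun u => y u i) (γ' i * (gcub (y t i) + 6 * Q (x t) i)) t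

/-- The discretization `S(x)ᵢ = 1` iff `xᵢ > 0`. -/
noncomputable def Sdisc (n : ℕ) (x : Fin n → ℝ) : Fin n → Bool := fun i => decide (0 < x i)

/-- The switching set: some signature coordinate vanishes. -/
def Bzero (n : ℕ) : Set (Fin n → ℝ) := {x | ∃ i, x i = 0}

/-- `σ : ℕ → {0,1}ⁿ` is the Boolean itinerary of the trajectory `x : ℝ → P`
under the discretization `S` (with switching set `B`): there is a finite or
infinite strictly increasing sequence of switching times `t 0 = 0 < t 1 < ⋯`
(indices `< K`, tending to `∞` if `K = ⊤`) such that the trajectory stays off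
`B` except possibly at switching times, `S ∘ x` is constant equal to `σ k` on
the `k`-th interval (including `u = 0` for `k = 0`), the values on consecutive
intervals differ, and `σ` is extended constantly after the last interval.
This encodes the transversality property together with the itinerary. -/
def IsItinerary {P : Type*} (n : ℕ) (x : ℝ → P) (S : P → Fin n → Bool)
    (B : Set P) (σ : ℕ → Fin n → Bool) : Prop :=
  ∃ (K : ℕ∞) (t : ℕ → ℝ), 1 ≤ K ∧ t 0 = 0 ∧
    (∀ k : ℕ, ((k : ℕ∞) + 1) < K → t k < t (k + 1)) ∧
    (K = ⊤ → Filter.Tendsto t Filter.atTop Filter.atTop) ∧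
    (∀ u : ℝ, 0 ≤ u → (∀ k : ℕ, 1 ≤ k → (k : ℕ∞) < K → u ≠ t k) → x u ∉ B) ∧
    (∀ k : ℕ, (k : ℕ∞) < K → ∀ u : ℝ,
      (t k < u ∨ (k = 0 ∧ u = 0)) → (∀ _ : ((k : ℕ∞) + 1) < K, u < t (k + 1)) →
      S (x u) = σ k) ∧
    (∀ k : ℕ, ((k : ℕ∞) + 1) < K → σ (k + 1) ≠ σ k) ∧
    (∀ τ : ℕ, K ≤ (τ : ℕ∞) + 1 → σ (τ + 1) = σ τ)

/-- The Boolean system `f` is monotone-stepping: along every trajectory, every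
state `s*` strictly between `f^[τ] s` and `f^[τ+1] s` satisfies
`f(s*) = f^[τ+1] s`. -/
def MonoStepping (n : ℕ) (f : (Fin n → Bool) → Fin n → Bool) : Prop :=
  ∀ (s : Fin n → Bool) (τ : ℕ) (sst : Fin n → Bool),
    (∀ i, f (f^[τ] s) i = (f^[τ] s) i → sst i = (f^[τ] s) i) →
    sst ≠ f^[τ + 1] s → f sst = f^[τ + 1] s

open Set Filter Topology

lemma gcub_ge {x : ℝ} (h : x ≤ 2) : -5 ≤ gcub x := by
  unfold gcub
  nlinarith [mul_nonneg (sq_nonneg (x+1)) (sub_nonneg.2 h)]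

lemma gcub_neg (x : ℝ) : gcub (-x) = -(gcub x) - 6 := by
  unfold gcub; ring

lemma Lpl_neg (x : ℝ) : Lpl (-x) = 1 - Lpl x := by
  unfold Lpl; split_ifs <;> linarith

lemma Lpl_nonneg (x : ℝ) : 0 ≤ Lpl x := by
  unfold Lpl; split_ifs <;> linarith

lemma Lpl_le_one (x : ℝ) : Lpl x ≤ 1 := by
  unfold Lpl; split_ifs <;> linarith

lemma Lpl_ge {y m : ℝ} (h : m ≤ y) (hm : m ≤ 1) : (m+1)/2 ≤ Lpl y := by
  unfold Lpl; split_ifs <;> linarith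

lemma Lpl_lt {y m : ℝ} (h : y < m) (hm : -1 < m) : Lpl y < (m+1)/2 := by
  unfold Lpl; split_ifs <;> linarith

lemma fence_gen {X X' F F' : ℝ → ℝ} {a b : ℝ} (hab : a ≤ b)
    (hd : ∀ u ∈ Icc a b, HasDerivAt X (X' u) u) (hF : ∀ u, HasDerivAt F (F' u) u)
    (h0 : F a ≤ X a) (hb : ∀ u ∈ Ico a b, F u = X u → F' u < X' u) : F b ≤ X b := by
  refine image_le_of_deriv_right_lt_deriv_boundary' (f := F) (f' := F') (B := X) (B' := X')
    (a := a) (b := b) ?_ ?_ h0 ?_ ?_ hb (right_mem_Icc.2 hab)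
  · exact fun u _ => (hF u).continuousAt.continuousWithinAt
  · exact fun u _ => (hF u).hasDerivWithinAt
  · exact fun u hu => (hd u hu).continuousAt.continuousWithinAt
  · exact fun u hu => (hd u ⟨hu.1, hu.2.le⟩).hasDerivWithinAt

lemma fence_const {X X' : ℝ → ℝ} {a b c : ℝ} (hab : a ≤ b)
    (hd : ∀ u ∈ Icc a b, HasDerivAt X (X' u) u)
    (h0 : c ≤ X a) (hb : ∀ u ∈ Ico a b, X u = c → 0 < X' u) : c ≤ X b := by
  exact fence_gen (F := fun _ => c) (F' := fun _ => 0) hab hd (fun u => hasDerivAt_const u c) h0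
    (fun u hu h => hb u hu h.symm)

lemma fence {X X' : ℝ → ℝ} {a b lo r : ℝ} (hab : a ≤ b)
    (hd : ∀ u ∈ Icc a b, HasDerivAt X (X' u) u)
    (h0 : lo ≤ X a) (hlo : lo ≤ 1) (hr : 0 ≤ r)
    (hb : ∀ u ∈ Ico a b, lo ≤ X u → X u ≤ 1 → r < X' u) : min 1 (lo + r*(b-a)) ≤ X b := by
  rcases hab.eq_or_lt with rfl | hlt
  · exact (min_le_right _ _).trans (by simpa using h0)
  set m := min 1 (lo + r*(b-a)) with hm
  have hba : 0 < b - a := by linarith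
  have hm1 : m ≤ 1 := min_le_left _ _
  have hm2 : m ≤ lo + r*(b-a) := min_le_right _ _
  have hm3 : lo ≤ m := le_min hlo (by nlinarith)
  set r' := (m - lo)/(b-a) with hr'
  have hr0 : 0 ≤ r' := div_nonneg (by linarith) hba.le
  have hrr : r' ≤ r := by rw [hr', div_le_iff₀ hba]; linarith
  have hrm : r' * (b-a) = m - lo := by rw [hr']; field_simp
  have key := fence_gen (F := fun u => lo + r' * (u - a)) (F' := fun _ => r') hab hd
    (fun u => by simpa using (((hasDerivAt_id u).sub_const a).const_mul r').const_add lo)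
    (by simpa using h0) (fun u hu h => by
      have h1 : 0 ≤ r' * (u - a) := mul_nonneg hr0 (by linarith [hu.1])
      have h2 : r' * (u - a) ≤ r' * (b - a) := mul_le_mul_of_nonneg_left (by linarith [hu.2]) hr0
      exact lt_of_le_of_lt hrr (hb u hu (by linarith) (by linarith)))
  linarith

lemma Ylow {ι : Type*} (F : Finset ι) (A : ι → ℝ) {T : ℝ} (hT : 0 < T)
    {Y q : ℝ → ℝ} {a b c g κ : ℝ} (hab : a ≤ b) (hg : 0 < g)
    (hd : ∀ u ∈ Icc a b, HasDerivAt Y (g * (gcub (Y u) + 6 * q u)) u)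
    (h0 : c ≤ Y a) (hk : 0 ≤ κ) (hk' : κ ≤ 1/4) (hc : c + κ * g * (b - a) ≤ 1)
    (hq0 : ∀ u ∈ Icc a b, 0 ≤ q u)
    (hq : ∀ u ∈ Ico a b, (∀ j ∈ F, ¬ (A j ≤ u ∧ u ≤ A j + T)) → 11/12 ≤ q u) :
    c + κ * g * (b - a) - 42 * g * F.card * T ≤ Y b := by
  set β : ℝ → ℝ := fun u => ∑ j ∈ F, 2 * T * Real.arctan ((u - A j)/T) with hβ
  set β' : ℝ → ℝ := fun u => ∑ j ∈ F, 2 * (1 / (1 + ((u - A j)/T)^2)) with hβ'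
  have hder : ∀ u, HasDerivAt β (β' u) u := by
    intro u
    apply HasDerivAt.fun_sum
    intro j _
    have := ((((hasDerivAt_id u).sub_const (A j)).div_const T).arctan).const_mul (2*T)
    refine this.congr_deriv ?_
    field_simp
    rfl
  have hβ'nn : ∀ u, ∀ j ∈ F, 0 ≤ 2 * (1 / (1 + ((u - A j)/T)^2)) := fun u j _ => by positivity
  have hβ'0 : ∀ u, 0 ≤ β' u := fun u => Finset.sum_nonneg (hβ'nn u)
  have hmono : Monotone β := monotone_of_deriv_nonneg (fun u => (hder u).differentiableAt)
    (fun u => by rw [(hder u).deriv]; exact hβ'0 u)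
  have hrange : β b - β a ≤ 7 * F.card * T := by
    rw [hβ, ← Finset.sum_sub_distrib]
    calc _ ≤ ∑ j ∈ F, 7 * T := by
          apply Finset.sum_le_sum
          intro j _
          have h1 := Real.arctan_lt_pi_div_two ((b - A j)/T)
          have h2 := Real.neg_pi_div_two_lt_arctan ((a - A j)/T)
          have h3 := Real.pi_lt_d2
          have : Real.arctan ((b - A j)/T) - Real.arctan ((a - A j)/T) ≤ 3.5 := by linarith
          nlinarith
      _ = _ := by simp; ring
  have key := fence_gen (F := fun u => c + κ * g * (u - a) - 6 * g * (β u - β a))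
    (F' := fun u => κ * g - 6 * g * β' u) hab hd
    (fun u => by
      have h1 := (((hasDerivAt_id u).sub_const a).const_mul (κ * g)).const_add c
      have h2 := ((hder u).sub_const (β a)).const_mul (6 * g)
      have := h1.fun_sub h2
      simpa using this)
    (by simpa using h0) (fun u hu h => by
      have hm := hmono hu.1
      have hY : Y u ≤ 1 := by
        have : κ * g * (u - a) ≤ κ * g * (b - a) :=
          mul_le_mul_of_nonneg_left (by linarith [hu.2]) (by positivity)
        have : 0 ≤ 6 * g * (β u - β a) := mul_nonneg (by positivity) (by linarith)
        linarith
      have hgc := gcub_ge (x := Y u) (by linarith)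
      have hq1 := hq0 u ⟨hu.1, hu.2.le⟩
      by_cases hbad : ∃ j ∈ F, A j ≤ u ∧ u ≤ A j + T
      · obtain ⟨j, hj, h1, h2⟩ := hbad
        have hb1 : 1 ≤ β' u := by
          refine le_trans ?_ (Finset.single_le_sum (hβ'nn u) hj)
          have h3 : ((u - A j)/T) ≤ 1 := by rw [div_le_one hT]; linarith
          have h4 : 0 ≤ ((u - A j)/T) := div_nonneg (by linarith) hT.le
          have h5 : ((u - A j)/T)^2 ≤ 1 := by nlinarith
          rw [mul_one_div, le_div_iff₀ (by positivity)]
          linarith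
        nlinarith
      · push Not at hbad
        have := hq u hu (fun j hj hh => absurd hh.2 (not_le.2 (hbad j hj hh.1)))
        nlinarith [hβ'0 u])
  nlinarith

lemma moveY {X Y : ℝ → ℝ} {t0 t γ δ : ℝ} (hγ : 0 < γ) (hδ : 0 < δ) (hδ' : δ ≤ 1/10)
    (hX : ∀ u ∈ Icc t0 t, HasDerivAt X (γ * (gcub (X u) + 6 * Lpl (Y u))) u)
    (h0 : X t0 ≤ -1)
    (hdrop : ∀ u v, t0 ≤ u → u ≤ v → v ≤ t → min (Y u) 1 - δ^2/20 ≤ Y v)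
    {u : ℝ} (hu : u ∈ Icc t0 t) (hXu : -1 + δ/4 < X u) : 2/3 - δ^2 * (9/80) ≤ Y u := by
  by_contra! hlt
  have hY : ∀ v ∈ Icc t0 u, Y v < 2/3 - δ^2/16 := by
    intro v hv
    have := hdrop v u hv.1 hv.2 hu.2
    by_contra! hc
    have : 2/3 - δ^2/16 ≤ min (Y v) 1 := le_min hc (by nlinarith)
    linarith
  have := fence_const (X := fun v => - X v)
    (X' := fun v => - (γ * (gcub (X v) + 6 * Lpl (Y v)))) (c := 1 - δ/4) hu.1
    (fun v hv => (hX v ⟨hv.1, hv.2.trans hu.2⟩).neg) (by linarith) (fun v hv h => by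
      have h1 := Lpl_lt (hY v ⟨hv.1, hv.2.le⟩) (by nlinarith)
      have h2 : X v = -1 + δ/4 := by linarith
      have h3 : gcub (X v) = -5 + 3 * (δ/4)^2 - (δ/4)^3 := by rw [h2]; unfold gcub; ring
      have h4 : 0 < δ^3 := by positivity
      have : gcub (X v) + 6 * Lpl (Y v) < 0 := by rw [h3]; nlinarith
      nlinarith)
  linarith

lemma moveSpeed {X Y γ δ : ℝ} (hγ : 0 < γ) (hδ : 0 < δ) (hδ' : δ ≤ 1/10)
    (hX : -1 + δ ≤ X) (hX' : X ≤ 1) (hY : 2/3 - δ^2 * (9/80) ≤ Y) :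
    γ * (δ^2/2) < γ * (gcub X + 6 * Lpl Y) := by
  apply mul_lt_mul_of_pos_left _ hγ
  have h1 := Lpl_ge hY (by nlinarith)
  have h2 : gcub X = -5 + (X+1)^2 * (2 - X) := by unfold gcub; ring
  have h3 : δ^2 ≤ (X+1)^2 := by nlinarith
  have h4 : (X+1)^2 ≤ (X+1)^2 * (2 - X) := by nlinarith [sq_nonneg (X+1)]
  nlinarith [sq_pos_of_pos hδ]

structure Phase (n : ℕ) (γ γ' : Fin n → ℝ) (X Y q : ℝ → Fin n → ℝ) (M : Finset (Fin n))
    (t0 δ T μ : ℝ) : Prop where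
  hγ : ∀ i, 0 < γ i
  hγ' : ∀ i, 0 < γ' i ∧ γ' i < μ
  hδ : 0 < δ
  hδ' : δ ≤ 1/10
  hT : 0 < T
  hTγ : ∀ i, 2 ≤ γ i * (δ^2/2) * T
  h1 : 42 * μ * (n+1) * T ≤ δ^2/40
  h2 : 42 * μ ≤ 1
  h3 : 42 * 42 * 4 * n * T * μ ≤ 1
  hX : ∀ i, ∀ u, t0 ≤ u →
    HasDerivAt (fun u => X u i) (γ i * (gcub (X u i) + 6 * Lpl (Y u i))) u
  hY : ∀ i, ∀ u, t0 ≤ u →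
    HasDerivAt (fun u => Y u i) (γ' i * (gcub (Y u i) + 6 * q u i)) u
  hq0 : ∀ u i, 0 ≤ q u i
  hq1 : ∀ u i, q u i ≤ 1
  hstay : ∀ i, i ∉ M → 1 ≤ X t0 i ∧ 1/2 ≤ Y t0 i
  hmove : ∀ i, i ∈ M → X t0 i ≤ -1 ∧ Y t0 i ≤ -1/2
  hgood : ∀ u, t0 ≤ u → (∀ i, i ∉ M → 1 ≤ X u i) →
    (∀ i ∈ M, X u i ≤ -1 + δ ∨ 1 ≤ X u i) → (M.Nonempty → ∃ i ∈ M, X u i < 1) →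
    ∀ i, 11/12 ≤ q u i

def Drop {n : ℕ} (Y : ℝ → Fin n → ℝ) (t0 t d : ℝ) : Prop :=
  ∀ i u v, t0 ≤ u → u ≤ v → v ≤ t → min (Y u i) 1 - d ≤ Y v i

def Pre {n : ℕ} (X : ℝ → Fin n → ℝ) (M : Finset (Fin n)) (t0 t : ℝ) : Prop :=
  ∀ u ∈ Ico t0 t, M.Nonempty → ∃ i ∈ M, X u i < 1

namespace Phase

variable {n : ℕ} {γ γ' : Fin n → ℝ} {X Y q : ℝ → Fin n → ℝ} {M : Finset (Fin n)}
    {t0 δ T μ : ℝ}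

lemma stayX (P : Phase n γ γ' X Y q M t0 δ T μ) {t : ℝ} (hE : Drop Y t0 t (δ^2/20))
    {i : Fin n} (hi : i ∉ M) {u : ℝ} (hu : u ∈ Icc t0 t) : 1 ≤ X u i := by
  have hδ := P.hδ
  have hδ' := P.hδ'
  refine fence_const (X := fun u => X u i) hu.1 (fun v hv => P.hX i v hv.1) (P.hstay i hi).1 ?_
  intro v hv h
  have h1 := hE i t0 v le_rfl hv.1 (hv.2.le.trans hu.2)
  have h2 : 1/2 ≤ min (Y t0 i) 1 := le_min (P.hstay i hi).2 (by norm_num)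
  have h3 : 0 ≤ Y v i := by nlinarith
  have h4 := Lpl_ge h3 (by norm_num)
  have h5 : gcub (X v i) = -1 := by rw [h]; unfold gcub; norm_num
  have := P.hγ i
  apply mul_pos this
  linarith

lemma moveYP (P : Phase n γ γ' X Y q M t0 δ T μ) {t : ℝ} (hE : Drop Y t0 t (δ^2/20))
    {i : Fin n} (hi : i ∈ M) {u : ℝ} (hu : u ∈ Icc t0 t) (hXu : -1 + δ/4 < X u i) :
    2/3 - δ^2 * (9/80) ≤ Y u i :=
  moveY (X := fun u => X u i) (Y := fun u => Y u i) (P.hγ i) P.hδ P.hδ'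
    (fun v hv => P.hX i v hv.1) (P.hmove i hi).1 (hE i) hu hXu

lemma moveX (P : Phase n γ γ' X Y q M t0 δ T μ) {t : ℝ} (hE : Drop Y t0 t (δ^2/20))
    {i : Fin n} (hi : i ∈ M) : ∃ a, ∀ u ∈ Icc t0 t, ¬ (a ≤ u ∧ u ≤ a + T) →
      X u i ≤ -1 + δ ∨ 1 ≤ X u i := by
  have hδ := P.hδ
  have hδ' := P.hδ'
  by_cases hex : ∃ u ∈ Icc t0 t, -1 + δ ≤ X u i
  · have hc : ContinuousOn (fun u => X u i) (Icc t0 t) :=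
      fun u hu => (P.hX i u hu.1).continuousAt.continuousWithinAt
    have hcl : IsCompact (Icc t0 t ∩ (fun u => X u i) ⁻¹' (Ici (-1 + δ))) :=
      isCompact_Icc.of_isClosed_subset
        (hc.preimage_isClosed_of_isClosed isClosed_Icc isClosed_Ici) inter_subset_left
    obtain ⟨u0, hu0, hu0'⟩ := hex
    obtain ⟨a, ⟨ha, haX⟩, hamin⟩ := hcl.exists_isLeast ⟨u0, hu0, hu0'⟩
    simp only [mem_preimage, mem_Ici] at haX
    refine ⟨a, fun u hu hnot => ?_⟩
    rcases lt_or_ge u a with hua | hua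
    · left
      by_contra! hlt
      exact absurd (hamin ⟨hu, hlt.le⟩) (not_le.2 hua)
    · right
      have huT : a + T < u := by
        by_contra! h
        exact hnot ⟨hua, h⟩
      have hr : 0 ≤ γ i * (δ^2/2) := by have := P.hγ i; positivity
      have := fence (X := fun u => X u i) (lo := -1 + δ) (r := γ i * (δ^2/2)) hua
        (fun v hv => P.hX i v (ha.1.trans hv.1)) haX (by linarith) hr
        (fun v hv h1 h2 => by
          exact moveSpeed (P.hγ i) hδ hδ' h1 h2
            (P.moveYP hE hi ⟨ha.1.trans hv.1, hv.2.le.trans hu.2⟩ (by linarith)))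
      refine le_trans (le_min le_rfl ?_) this
      have h4 := P.hTγ i
      have h5 : γ i * (δ^2/2) * T ≤ γ i * (δ^2/2) * (u - a) :=
        mul_le_mul_of_nonneg_left (by linarith) hr
      linarith
  · push Not at hex
    exact ⟨0, fun u hu _ => Or.inl (hex u hu).le⟩

lemma good (P : Phase n γ γ' X Y q M t0 δ T μ) {t : ℝ} (hE : Drop Y t0 t (δ^2/20))
    (hP : Pre X M t0 t) : ∃ A : Fin n → ℝ, ∀ u ∈ Ico t0 t,
      (∀ j ∈ M, ¬ (A j ≤ u ∧ u ≤ A j + T)) → ∀ i, 11/12 ≤ q u i := by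
  choose! A hA using fun i (hi : i ∈ M) => P.moveX hE hi
  refine ⟨A, fun u hu hn => P.hgood u hu.1 (fun i hi => P.stayX hE hi ⟨hu.1, hu.2.le⟩) ?_
    (hP u hu)⟩
  exact fun i hi => hA i hi u ⟨hu.1, hu.2.le⟩ (hn i hi)

lemma cardT (P : Phase n γ γ' X Y q M t0 δ T μ) (i : Fin n) :
    42 * γ' i * M.card * T ≤ 42 * γ' i * n * T ∧ 42 * γ' i * n * T ≤ δ^2/40 := by
  have hT := P.hT
  have hg := P.hγ' i
  have hc : (M.card : ℝ) ≤ n := by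
    have := M.card_le_univ
    simp at this
    exact_mod_cast this
  constructor
  · have := hg.1
    gcongr
  · refine le_trans ?_ P.h1
    have h0 : 0 ≤ (n : ℝ) := by positivity
    have h1 : γ' i * (n * T) ≤ μ * ((n + 1) * T) := by
      have : (n : ℝ) * T ≤ (n+1) * T := by nlinarith
      have : 0 ≤ (n : ℝ) * T := by positivity
      have := hg.1
      have := hg.2
      nlinarith
    nlinarith

lemma T42 (P : Phase n γ γ' X Y q M t0 δ T μ) (i : Fin n) : 42 * γ' i * T ≤ δ^2/40 := by
  have hT := P.hT
  have hg := P.hγ' i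
  refine le_trans ?_ P.h1
  have h0 : 0 ≤ (n : ℝ) := by positivity
  have h1 : γ' i * T ≤ μ * T := by nlinarith
  have h2 : 0 ≤ μ * n * T := by have : 0 < μ := by linarith
                                positivity
  nlinarith

lemma imp (P : Phase n γ γ' X Y q M t0 δ T μ) {t : ℝ} (hE : Drop Y t0 t (δ^2/20))
    (hP : Pre X M t0 t) : Drop Y t0 t (δ^2/40) := by
  obtain ⟨A, hA⟩ := P.good hE hP
  intro i u v hu huv hv
  have := Ylow M A P.hT (Y := fun u => Y u i) (q := fun u => q u i) (a := u) (b := v)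
    (c := min (Y u i) 1) (κ := 0) huv (P.hγ' i).1 (fun w hw => P.hY i w (hu.trans hw.1))
    (min_le_left _ _) le_rfl (by norm_num) (by simp) (fun w _ => P.hq0 w i)
    (fun w hw h => hA w ⟨hu.trans hw.1, hw.2.trans_le hv⟩ h i)
  have h2 := P.cardT i
  simp only [zero_mul, add_zero] at this
  linarith

lemma shortDrop (P : Phase n γ γ' X Y q M t0 δ T μ) {u v : ℝ} (hu : t0 ≤ u) (huv : u ≤ v)
    (hv : v ≤ u + T) (i : Fin n) : min (Y u i) 1 - δ^2/40 ≤ Y v i := by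
  have := Ylow (Finset.univ : Finset Unit) (fun _ => u) P.hT (Y := fun u => Y u i)
    (q := fun u => q u i) (a := u) (b := v)
    (c := min (Y u i) 1) (κ := 0) huv (P.hγ' i).1 (fun w hw => P.hY i w (hu.trans hw.1))
    (min_le_left _ _) le_rfl (by norm_num) (by simp) (fun w _ => P.hq0 w i)
    (fun w hw h => absurd ⟨hw.1, (hw.2.le.trans hv)⟩ (h () (Finset.mem_univ _)))
  have h2 := P.T42 i
  simp only [zero_mul, add_zero, Finset.card_univ, Fintype.card_unit, Nat.cast_one,
    mul_one] at this
  linarith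

lemma drop (P : Phase n γ γ' X Y q M t0 δ T μ) {t : ℝ} (hP : Pre X M t0 t) :
    Drop Y t0 t (δ^2/20) := by
  have hT := P.hT
  have hδ := P.hδ
  have key : ∀ k : ℕ, ∀ t, t ≤ t0 + k * T → Pre X M t0 t → Drop Y t0 t (δ^2/20) := by
    intro k
    induction k with
    | zero =>
      intro t ht _ i u v hu huv hv
      simp at ht
      have : u = v := by linarith
      subst this
      have := min_le_left (Y u i) 1
      nlinarith
    | succ k ih =>
      intro t ht hP i u v hu huv hv
      push_cast at ht
      have hP' : Pre X M t0 (t - T) := fun w hw => hP w ⟨hw.1, by linarith [hw.2]⟩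
      have h1 := P.imp (ih (t - T) (by linarith) hP') hP'
      rcases le_total v (t - T) with hvt | hvt
      · have := h1 i u v hu huv hvt
        nlinarith
      · rcases le_total u (t - T) with hut | hut
        · have ha := h1 i u (t - T) hu hut le_rfl
          have hb := P.shortDrop (hu.trans hut) hvt (by linarith) i
          have hc : min (Y u i) 1 - δ^2/40 ≤ min (Y (t - T) i) 1 :=
            le_min ha (by have := min_le_right (Y u i) 1; nlinarith)
          linarith
        · have := P.shortDrop hu huv (by linarith) i
          nlinarith
  obtain ⟨k, hk⟩ := exists_nat_ge ((t - t0)/T)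
  rw [div_le_iff₀ hT] at hk
  exact key k t (by linarith) hP

lemma reach (P : Phase n γ γ' X Y q M t0 δ T μ) : ∃ t, t0 ≤ t ∧ ∀ i ∈ M, 1 ≤ X t i := by
  by_contra! hno
  have hδ := P.hδ
  have hδ' := P.hδ'
  have hP : ∀ t, Pre X M t0 t := fun t u hu _ => hno u hu.1
  have hE : ∀ t, Drop Y t0 t (δ^2/20) := fun t => P.drop (hP t)
  have key : ∀ i ∈ M, ∃ τ, t0 ≤ τ ∧ ∀ u, τ ≤ u → 1 ≤ X u i := by
    intro i hi
    have hg := (P.hγ' i).1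
    have hgg := P.hγ i
    have hY0 := (P.hmove i hi).2
    set t := t0 + (1 - Y t0 i) / (1/4 * γ' i) with ht
    have htt : t0 ≤ t := by
      have : 0 ≤ (1 - Y t0 i) / (1/4 * γ' i) := div_nonneg (by linarith) (by positivity)
      linarith
    have hmul : 1/4 * γ' i * (t - t0) = 1 - Y t0 i := by
      rw [ht]; field_simp; ring
    obtain ⟨A, hA⟩ := P.good (hE t) (hP t)
    have h1 := Ylow M A P.hT (Y := fun u => Y u i) (q := fun u => q u i) (a := t0) (b := t)
      (c := Y t0 i) (κ := 1/4) htt hg (fun w hw => P.hY i w hw.1)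
      le_rfl (by norm_num) (by norm_num) (by linarith) (fun w _ => P.hq0 w i)
      (fun w hw h => hA w hw h i)
    have h2 := P.cardT i
    have h3 : 9/10 ≤ Y t i := by nlinarith
    have h4 : ∀ u, t ≤ u → 8/10 ≤ Y u i := by
      intro u hu
      have := hE u i t u htt hu le_rfl
      have : 9/10 ≤ min (Y t i) 1 := le_min h3 (by norm_num)
      nlinarith
    have h5 : ∀ u, t ≤ u → X u i ≤ 1 → γ i * (1/5) < γ i * (gcub (X u i) + 6 * Lpl (Y u i)) := by
      intro u hu hX
      apply mul_lt_mul_of_pos_left _ hgg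
      have := Lpl_ge (h4 u hu) (by norm_num)
      have := gcub_ge (x := X u i) (by linarith)
      linarith
    set lo := min 1 (X t i) with hlo
    have hlo1 : lo ≤ 1 := min_le_left _ _
    refine ⟨t + (1 - lo)/(γ i * (1/5)), ?_, ?_⟩
    · have : 0 ≤ (1 - lo)/(γ i * (1/5)) := div_nonneg (by linarith) (by positivity)
      linarith
    · intro u hu
      have h00 : 0 ≤ (1 - lo)/(γ i * (1/5)) := div_nonneg (by linarith) (by positivity)
      have htu : t ≤ u := by linarith
      have h6 := fence (X := fun u => X u i) (lo := lo) (r := γ i * (1/5)) htu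
        (fun v hv => P.hX i v (htt.trans hv.1)) (min_le_right _ _) hlo1 (by positivity)
        (fun v hv _ h => h5 v hv.1 h)
      refine le_trans (le_min le_rfl ?_) h6
      have h7 : (1 - lo)/(γ i * (1/5)) ≤ u - t := by linarith
      rw [div_le_iff₀ (by positivity)] at h7
      linarith
  choose! τ hτ using key
  obtain ⟨B, hB⟩ : ∃ B, ∀ i ∈ M, τ i ≤ B :=
    ⟨∑ i, |τ i|, fun i _ => (le_abs_self _).trans
      (Finset.single_le_sum (f := fun i => |τ i|) (fun _ _ => abs_nonneg _) (Finset.mem_univ i))⟩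
  obtain ⟨i, hi, hlt⟩ := hno (max t0 B) (le_max_left _ _)
  have := (hτ i hi).2 (max t0 B) ((hB i hi).trans (le_max_right _ _))
  linarith

lemma core (P : Phase n γ γ' X Y q M t0 δ T μ) : ∃ t1, t0 + 1 ≤ t1 ∧
    (∀ i, 1 ≤ X t1 i ∧ 1/2 ≤ Y t1 i) ∧ ∀ u ∈ Icc t0 t1, ∀ i, (i ∉ M → 0 < X u i) ∧
      (i ∈ M → X u i = 0 → 0 < γ i * (gcub (X u i) + 6 * Lpl (Y u i))) := by
  have hδ := P.hδ
  have hδ' := P.hδ'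
  have hT := P.hT
  have hmid : ∀ t1, Pre X M t0 t1 → ∀ u ∈ Icc t0 t1, ∀ i, (i ∉ M → 0 < X u i) ∧
      (i ∈ M → X u i = 0 → 0 < γ i * (gcub (X u i) + 6 * Lpl (Y u i))) := by
    intro t1 hP u hu i
    have hE := P.drop hP
    refine ⟨fun hi => lt_of_lt_of_le one_pos (P.stayX hE hi hu), fun hi h0 => ?_⟩
    have h1 := P.moveYP hE hi hu (by rw [h0]; linarith)
    have h2 := moveSpeed (P.hγ i) hδ hδ' (X := X u i) (by rw [h0]; linarith)
      (by rw [h0]; linarith) h1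
    have : 0 < γ i * (δ^2/2) := by have := P.hγ i; positivity
    linarith
  have hend : ∀ t1, t0 ≤ t1 → Pre X M t0 t1 → ∀ i, i ∉ M → ∀ κ, 0 ≤ κ → κ ≤ 1/4 →
      κ * (t1 - t0) = 42 * M.card * T → 1/2 ≤ Y t1 i := by
    intro t1 ht hP i hi κ hk hk' hkk
    have hE := P.drop hP
    obtain ⟨A, hA⟩ := P.good hE hP
    have h2 := P.cardT i
    have h3 : κ * γ' i * (t1 - t0) = 42 * γ' i * M.card * T := by
      linear_combination γ' i * hkk
    have h1 := Ylow M A P.hT (Y := fun u => Y u i) (q := fun u => q u i) (a := t0) (b := t1)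
      (c := 1/2) (κ := κ) ht (P.hγ' i).1 (fun w hw => P.hY i w hw.1)
      (P.hstay i hi).2 hk hk' (by nlinarith) (fun w _ => P.hq0 w i)
      (fun w hw h => hA w hw h i)
    linarith
  rcases M.eq_empty_or_nonempty with hM | hM
  · have hP : Pre X M t0 (t0 + 1) := by
      intro u _ h
      simp [hM] at h
    refine ⟨t0 + 1, le_rfl, fun i => ?_, hmid _ hP⟩
    have hi : i ∉ M := by simp [hM]
    exact ⟨P.stayX (P.drop hP) hi ⟨by linarith, le_rfl⟩,
      hend _ (by linarith) hP i hi 0 le_rfl (by norm_num) (by simp [hM])⟩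
  · obtain ⟨t, ht, htX⟩ := P.reach
    have hcl : IsCompact (Icc t0 t ∩ ⋂ i ∈ M, (Icc t0 t ∩ (fun u => X u i) ⁻¹' (Ici 1))) := by
      apply isCompact_Icc.inter_right
      refine isClosed_biInter fun i _ => ?_
      have hc : ContinuousOn (fun u => X u i) (Icc t0 t) :=
        fun u hu => (P.hX i u hu.1).continuousAt.continuousWithinAt
      exact hc.preimage_isClosed_of_isClosed isClosed_Icc isClosed_Ici
    obtain ⟨t1, ⟨ht1, ht1X⟩, hmin⟩ := hcl.exists_isLeast
      ⟨t, right_mem_Icc.2 ht, by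
        simp only [mem_iInter]
        exact fun i hi => ⟨right_mem_Icc.2 ht, htX i hi⟩⟩
    simp only [mem_iInter] at ht1X
    have hX1 : ∀ i ∈ M, 1 ≤ X t1 i := fun i hi => (ht1X i hi).2
    have hP : Pre X M t0 t1 := by
      intro u hu _
      by_contra! hall
      have hu' : u ∈ Icc t0 t := ⟨hu.1, hu.2.le.trans ht1.2⟩
      have := hmin ⟨hu', by simp only [mem_iInter]; exact fun i hi => ⟨hu', hall i hi⟩⟩
      linarith [hu.2]
    have hE := P.drop hP
    have hYM : ∀ i ∈ M, 1/2 ≤ Y t1 i := by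
      intro i hi
      have := P.moveYP hE hi ⟨ht1.1, le_rfl⟩ (by linarith [hX1 i hi])
      nlinarith
    obtain ⟨j, hj⟩ := hM
    have hlt : t0 < t1 := by
      rcases ht1.1.eq_or_lt with h | h
      · have := hX1 j hj
        have := (P.hmove j hj).1
        rw [h] at this
        linarith
      · exact h
    have hlen : 1 ≤ 42 * γ' j * (t1 - t0) := by
      have h0 := Ylow (Finset.univ : Finset Unit) (fun _ => t0) (T := t1 - t0) (by linarith)
        (Y := fun u => - Y u j)
        (q := fun u => 1 - q u j) (a := t0) (b := t1)
        (c := 1/2) (κ := 0) hlt.le (P.hγ' j).1 (fun w hw => by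
          have := (P.hY j w hw.1).fun_neg
          refine this.congr_deriv ?_
          rw [gcub_neg]; ring)
        (by linarith [(P.hmove j hj).2]) le_rfl (by norm_num) (by norm_num)
        (fun w _ => by linarith [P.hq1 w j])
        (fun w hw h => absurd ⟨hw.1, by linarith [hw.2]⟩ (h () (Finset.mem_univ _)))
      have := hYM j hj
      simp at h0
      linarith
    have hγj := P.hγ' j
    have hlen2 : 1 ≤ 42 * μ * (t1 - t0) := by nlinarith
    have hlen3 : 1 ≤ t1 - t0 := by nlinarith [P.h2]
    refine ⟨t1, by linarith, fun i => ?_, hmid _ hP⟩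
    by_cases hi : i ∈ M
    · exact ⟨hX1 i hi, hYM i hi⟩
    · refine ⟨P.stayX hE hi ⟨ht1.1, le_rfl⟩, hend _ ht1.1 hP i hi (42 * M.card * T / (t1 - t0))
        (div_nonneg (by positivity) (by linarith)) ?_ ?_⟩
      · rw [div_le_iff₀ (by linarith)]
        have hc : (M.card : ℝ) ≤ n := by
          have := M.card_le_univ
          simp at this
          exact_mod_cast this
        have h3 := P.h3
        have h4 : 42 * (M.card : ℝ) * T ≤ 42 * n * T := by gcongr
        have h5 : 0 ≤ 42 * (n : ℝ) * T := by positivity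
        have h6 : 42 * (n : ℝ) * T * 1 ≤ 42 * n * T * (42 * μ * (t1 - t0)) :=
          mul_le_mul_of_nonneg_left hlen2 h5
        nlinarith
      · have : t1 - t0 ≠ 0 := by linarith
        field_simp

end Phase

lemma Sdisc_const {n : ℕ} {x : ℝ → Fin n → ℝ} {u v : ℝ} (huv : u ≤ v)
    (hc : ∀ i, ContinuousOn (fun w => x w i) (Icc u v))
    (hB : ∀ w ∈ Icc u v, x w ∉ Bzero n) : Sdisc n (x u) = Sdisc n (x v) := by
  funext i
  unfold Sdisc
  have hu := left_mem_Icc.2 huv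
  have hv := right_mem_Icc.2 huv
  have hnz : ∀ w ∈ Icc u v, x w i ≠ 0 := fun w hw h => hB w hw ⟨i, h⟩
  have key : 0 < x u i ↔ 0 < x v i := by
    constructor
    · intro h
      by_contra! h2
      obtain ⟨w, hw, hw0⟩ := isPreconnected_Icc.intermediate_value hv hu (hc i) ⟨h2, h.le⟩
      exact hnz w hw hw0
    · intro h
      by_contra! h2
      obtain ⟨w, hw, hw0⟩ := isPreconnected_Icc.intermediate_value hu hv (hc i) ⟨h2, h.le⟩
      exact hnz w hw hw0
  simp [key]

lemma exists_itin {n : ℕ} {x : ℝ → Fin n → ℝ}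
    (hc : ∀ i, ContinuousOn (fun w => x w i) (Ici 0))
    (h0 : ∃ ε > 0, ∀ u, 0 ≤ u → u < ε → x u ∉ Bzero n)
    (hloc : ∀ z > 0, ∃ ε > 0, ∃ Sm Sp : Fin n → Bool,
      (∀ u ∈ Ioo (z - ε) z, Sdisc n (x u) = Sm ∧ x u ∉ Bzero n) ∧
      (∀ u ∈ Ioo z (z + ε), Sdisc n (x u) = Sp ∧ x u ∉ Bzero n) ∧
      (x z ∈ Bzero n → Sm ≠ Sp)) :
    ∃ σ, IsItinerary n x (Sdisc n) (Bzero n) σ := by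
  classical
  set Z : Set ℝ := {u | 0 ≤ u ∧ x u ∈ Bzero n} with hZ
  have h0Z : x 0 ∉ Bzero n := by
    obtain ⟨ε, hε, h⟩ := h0
    exact h 0 le_rfl hε
  have hfin : ∀ T, (Icc 0 T ∩ Z).Finite := by
    intro T
    refine isCompact_Icc.induction_on (p := fun s => (s ∩ Z).Finite) (by simp) ?_ ?_ ?_
    · intro s t hst ht
      exact ht.subset (inter_subset_inter_left _ hst)
    · intro s t hs ht
      rw [union_inter_distrib_right]
      exact hs.union ht
    · intro z hz
      rcases hz.1.eq_or_lt with h | h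
      · obtain ⟨ε, hε, hh⟩ := h0
        refine ⟨Iio ε, mem_nhdsWithin_of_mem_nhds (Iio_mem_nhds (by linarith)), ?_⟩
        convert Set.finite_empty (α := ℝ)
        ext u
        simp only [mem_inter_iff, mem_Iio, mem_empty_iff_false, iff_false]
        rintro ⟨h1, h2, h3⟩
        exact hh u h2 h1 h3
      · obtain ⟨ε, hε, Sm, Sp, h1, h2, _⟩ := hloc z h
        refine ⟨Ioo (z - ε) (z + ε), mem_nhdsWithin_of_mem_nhds
          (Ioo_mem_nhds (by linarith) (by linarith)), (Set.finite_singleton z).subset ?_⟩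
        rintro u ⟨⟨hu1, hu2⟩, _, hu3⟩
        rcases lt_trichotomy u z with hl | hl | hl
        · exact absurd hu3 (h1 u ⟨hu1, hl⟩).2
        · exact hl
        · exact absurd hu3 (h2 u ⟨hl, hu2⟩).2
  have hnext : ∀ u, 0 ≤ u → (Z ∩ Ioi u).Nonempty →
      ∃ m, m ∈ Z ∧ u < m ∧ ∀ z ∈ Z, u < z → m ≤ z := by
    rintro u hu ⟨z0, hz0, hz0'⟩
    simp only [mem_Ioi] at hz0'
    have hf : (Icc 0 z0 ∩ Z ∩ Ioi u).Finite := (hfin z0).subset inter_subset_left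
    obtain ⟨m, hm, hmin⟩ := Set.exists_min_image _ id hf ⟨z0, ⟨⟨hz0.1, le_rfl⟩, hz0⟩, hz0'⟩
    refine ⟨m, hm.1.2, hm.2, fun z hz huz => ?_⟩
    rcases le_total z z0 with h | h
    · exact hmin z ⟨⟨⟨hz.1, h⟩, hz⟩, huz⟩
    · exact hm.1.1.2.trans h
  choose! nx hnx using hnext
  set N : ℝ → Prop := fun u => (Z ∩ Ioi u).Nonempty with hN
  set nxt : ℝ → ℝ := fun u => if N u then nx u else u with hnxt
  set t : ℕ → ℝ := fun k => nxt^[k] 0 with ht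
  have t0 : t 0 = 0 := rfl
  have tsucc : ∀ k, t (k+1) = nxt (t k) := fun k => Function.iterate_succ_apply' _ _ _
  have tnn : ∀ k, 0 ≤ t k := by
    intro k
    induction k with
    | zero => exact le_rfl
    | succ k ih =>
      rw [tsucc, hnxt]
      simp only
      split_ifs with h
      · exact ih.trans (hnx _ ih h).2.1.le
      · exact ih
  have tN : ∀ k, N (t k) → t (k+1) ∈ Z ∧ t k < t (k+1) ∧ ∀ z ∈ Z, t k < z → t (k+1) ≤ z := by
    intro k h
    have : t (k+1) = nx (t k) := by rw [tsucc, hnxt]; simp only [if_pos h]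
    rw [this]
    exact hnx _ (tnn k) h
  have tnN : ∀ k, ¬ N (t k) → t (k+1) = t k := by
    intro k h
    rw [tsucc, hnxt]; simp only [if_neg h]
  have hNmono : ∀ k, N (t (k+1)) → N (t k) := by
    intro k h
    by_contra hn
    rw [tnN k hn] at h
    exact hn h
  obtain ⟨K, hK⟩ : ∃ K : ℕ∞, ∀ k : ℕ, ((k : ℕ∞) + 1 < K ↔ N (t k)) ∧ 1 ≤ K := by
    by_cases hex : ∃ k, ¬ N (t k)
    · refine ⟨((Nat.find hex + 1 : ℕ) : ℕ∞), fun k => ⟨?_, ?_⟩⟩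
      · have : ((k : ℕ∞) + 1 < ((Nat.find hex + 1 : ℕ) : ℕ∞)) ↔ k < Nat.find hex := by
          rw [show ((k : ℕ∞) + 1) = ((k + 1 : ℕ) : ℕ∞) by push_cast; rfl, Nat.cast_lt]
          omega
        rw [this]
        constructor
        · intro h
          by_contra hn
          exact Nat.find_min hex h hn
        · intro h
          by_contra! hle
          have hall : ∀ m, Nat.find hex ≤ m → ¬ N (t m) := by
            intro m hm
            induction m, hm using Nat.le_induction with
            | base => exact Nat.find_spec hex
            | succ m _ ih => exact fun hh => ih (hNmono m hh)
          exact hall k hle h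
      · rw [show (1 : ℕ∞) = ((1 : ℕ) : ℕ∞) by rfl, Nat.cast_le]
        omega
    · push Not at hex
      refine ⟨⊤, fun k => ⟨⟨fun _ => hex k, fun _ => ?_⟩, le_top⟩⟩
      exact_mod_cast ENat.natCast_lt_top (k+1)
  have hK1 : 1 ≤ K := (hK 0).2
  have hKN : ∀ k : ℕ, (k : ℕ∞) + 1 < K ↔ N (t k) := fun k => (hK k).1
  have htend : K = ⊤ → Tendsto t atTop atTop := by
    intro hT
    have hNall : ∀ k, N (t k) := fun k => (hKN k).1 (by
      rw [hT]; exact_mod_cast ENat.natCast_lt_top (k+1))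
    have hsm : StrictMono t := strictMono_nat_of_lt_succ fun k => (tN k (hNall k)).2.1
    refine tendsto_atTop_atTop_of_monotone hsm.monotone fun b => ?_
    by_contra! hlt
    have hsub : Set.range (fun k => t (k+1)) ⊆ Icc 0 b ∩ Z := by
      rintro _ ⟨k, rfl⟩
      exact ⟨⟨tnn _, (hlt _).le⟩, (tN k (hNall k)).1⟩
    have hinj : Function.Injective (fun k => t (k+1)) := fun a b h => by
      have := hsm.injective h
      omega
    exact (Set.infinite_range_of_injective hinj) ((hfin b).subset hsub)
  have hfree : ∀ u, 0 ≤ u → (∀ k : ℕ, 1 ≤ k → (k : ℕ∞) < K → u ≠ t k) → x u ∉ Bzero n := by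
    intro u hu hne huB
    have hu0 : 0 < u := by
      rcases hu.eq_or_lt with h | h
      · rw [← h] at huB
        exact absurd huB h0Z
      · exact h
    have hex : ∃ m : ℕ, ¬ ((m : ℕ∞) < K ∧ t m < u) := by
      by_cases hT : K = ⊤
      · obtain ⟨m, hm⟩ := ((htend hT).eventually_ge_atTop u).exists
        exact ⟨m, fun h => absurd h.2 (not_lt.2 hm)⟩
      · obtain ⟨m, rfl⟩ := ENat.ne_top_iff_exists.1 hT
        exact ⟨m, fun h => absurd h.1 (lt_irrefl _)⟩
    have hspec := Nat.find_spec hex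
    obtain ⟨k, hk⟩ : ∃ k, Nat.find hex = k + 1 := by
      apply Nat.exists_eq_succ_of_ne_zero
      intro h
      rw [h] at hspec
      apply hspec
      refine ⟨?_, by rw [t0]; exact hu0⟩
      exact lt_of_lt_of_le (by simp) hK1
    have hmin := Nat.find_min hex (m := k) (by omega)
    rw [not_not] at hmin
    rw [hk] at hspec
    have hNk : N (t k) := ⟨u, ⟨hu, huB⟩, hmin.2⟩
    have hk1 : ((k + 1 : ℕ) : ℕ∞) < K := by
      push_cast
      exact (hKN k).2 hNk
    have h1 := (tN k hNk).2.2 u ⟨hu, huB⟩ hmin.2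
    have h2 : u ≤ t (k+1) := by
      by_contra! h
      exact hspec ⟨hk1, h⟩
    exact hne (k+1) (by omega) hk1 (le_antisymm h2 h1)
  set σ : ℕ → Fin n → Bool := fun k =>
    if N (t k) then Sdisc n (x ((t k + t (k+1))/2)) else Sdisc n (x (t k + 1)) with hσ
  have hsegconst : ∀ k u v, t k ≤ u → 0 ≤ u → u ≤ v → (t k < u ∨ k = 0) → (N (t k) → v < t (k+1)) →
      Sdisc n (x u) = Sdisc n (x v) := by
    intro k u v hu hu0 huv hk hv
    refine Sdisc_const huv (fun i => (hc i).mono fun w hw => hu0.trans hw.1) ?_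
    intro w hw hwB
    have hwZ : w ∈ Z := ⟨hu0.trans hw.1, hwB⟩
    have htw : t k < w := by
      rcases hk with h | h
      · exact h.trans_le hw.1
      · subst h
        rw [t0]
        rcases hwZ.1.eq_or_lt with h | h
        · rw [← h] at hwB
          exact absurd hwB h0Z
        · exact h
    have hNk : N (t k) := ⟨w, hwZ, htw⟩
    have := (tN k hNk).2.2 w hwZ htw
    linarith [hv hNk, hw.2]
  have hseg : ∀ k : ℕ, ∀ u : ℝ, (t k < u ∨ (k = 0 ∧ u = 0)) → (N (t k) → u < t (k+1)) →
      Sdisc n (x u) = σ k := by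
    intro k u hu hu2
    have htu : t k ≤ u := by
      rcases hu with h | ⟨h, h'⟩
      · exact h.le
      · subst h; rw [h', t0]
    have hu0 : 0 ≤ u := (tnn k).trans htu
    have hk : t k < u ∨ k = 0 := hu.imp id And.left
    have main : ∀ p, t k < p → (N (t k) → p < t (k+1)) → Sdisc n (x u) = Sdisc n (x p) := by
      intro p hp hp2
      rcases le_total u p with h | h
      · exact hsegconst k u p htu hu0 h hk hp2
      · exact (hsegconst k p u hp.le ((tnn k).trans hp.le) h (Or.inl hp) hu2).symm
    rw [hσ]
    simp only
    split_ifs with hNk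
    · have := (tN k hNk).2.1
      exact main _ (by linarith) (fun _ => by linarith)
    · exact main _ (by linarith) (fun h => absurd h hNk)
  refine ⟨σ, K, t, hK1, t0, fun k hk => (tN k ((hKN k).1 hk)).2.1, htend, hfree, ?_, ?_, ?_⟩
  · intro k _ u hu hu2
    exact hseg k u hu (fun h => hu2 ((hKN k).2 h))
  · intro k hk
    have hNk := (hKN k).1 hk
    obtain ⟨hz, hlt, _⟩ := tN k hNk
    set z := t (k+1) with hzdef
    have hzpos : 0 < z := (tnn k).trans_lt hlt
    obtain ⟨ε, hε, Sm, Sp, hm, hp, hne⟩ := hloc z hzpos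
    have hL : σ k = Sm := by
      set u := max ((t k + z)/2) (z - ε/2) with hu
      have h1 : u < z := max_lt (by linarith) (by linarith)
      have h2 : z - ε < u := lt_of_lt_of_le (by linarith) (le_max_right _ _)
      have h3 : t k < u := lt_of_lt_of_le (by linarith) (le_max_left _ _)
      rw [← hseg k u (Or.inl h3) (fun _ => h1)]
      exact (hm u ⟨h2, h1⟩).1
    have hR : σ (k+1) = Sp := by
      obtain ⟨u, h1, h2, h3⟩ : ∃ u, z < u ∧ u < z + ε ∧ (N z → u < t (k+1+1)) := by
        by_cases h : N z
        · have := (tN (k+1) h).2.1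
          rw [← hzdef] at this
          refine ⟨min (z + ε/2) ((z + t (k+1+1))/2), lt_min (by linarith) (by linarith),
            (min_le_left _ _).trans_lt (by linarith), fun _ =>
              (min_le_right _ _).trans_lt (by linarith)⟩
        · exact ⟨z + ε/2, by linarith, by linarith, fun h' => absurd h' h⟩
      rw [← hseg (k+1) u (Or.inl h1) h3]
      exact (hp u ⟨h1, h2⟩).1
    rw [hL, hR]
    exact (hne hz.2).symm
  · intro τ hτ
    have hn : ¬ N (t τ) := fun h => absurd ((hKN τ).2 h) (not_lt.2 hτ)
    have he := tnN τ hn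
    rw [hσ]
    simp only
    rw [he]
    simp only [if_neg hn]

lemma itin_prop {n : ℕ} {x : ℝ → Fin n → ℝ} (f : (Fin n → Bool) → Fin n → Bool)
    (hloc : ∀ z > 0, ∃ ε > 0, ∃ Sm Sp : Fin n → Bool,
      (∀ u ∈ Ioo (z - ε) z, Sdisc n (x u) = Sm ∧ x u ∉ Bzero n) ∧
      (∀ u ∈ Ioo z (z + ε), Sdisc n (x u) = Sp ∧ x u ∉ Bzero n) ∧
      (x z ∉ Bzero n → Sm = Sp) ∧
      (x z ∈ Bzero n → f Sm ≠ Sm ∧ ∀ i, Sp i = f Sm i ∨ Sp i = Sm i))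
    (hev : ∀ s T, (∀ u, T < u → Sdisc n (x u) = s) → f s = s)
    {σ : ℕ → Fin n → Bool} (hσ : IsItinerary n x (Sdisc n) (Bzero n) σ) (τ : ℕ) :
    (∀ i, σ (τ + 1) i = f (σ τ) i ∨ σ (τ + 1) i = σ τ i) ∧
          (σ (τ + 1) = σ τ ↔ f (σ τ) = σ τ) := by
  obtain ⟨K, t, hK1, t0, tlt, _, _, hseg, hne, hlast⟩ := hσ
  by_cases hτ : (τ : ℕ∞) + 1 < K
  · have tnn : ∀ k : ℕ, (k : ℕ∞) < K → 0 ≤ t k := by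
      intro k
      induction k with
      | zero => intro _; rw [t0]
      | succ k ih =>
        intro h
        push_cast at h
        exact (ih (lt_of_le_of_lt (by exact_mod_cast Nat.le_succ k) h)).trans (tlt k h).le
    have hτK : (τ : ℕ∞) < K := lt_of_le_of_lt (by exact_mod_cast Nat.le_succ τ) hτ
    have hlt := tlt τ hτ
    have hnn := tnn τ hτK
    set z := t (τ+1) with hz
    obtain ⟨ε, hε, Sm, Sp, hm, hp, h1, h2⟩ := hloc z (by linarith)
    have hL : σ τ = Sm := by
      set u := max ((t τ + z)/2) (z - ε/2) with hu
      have h1 : u < z := max_lt (by linarith) (by linarith)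
      have h2 : z - ε < u := lt_of_lt_of_le (by linarith) (le_max_right _ _)
      have h3 : t τ < u := lt_of_lt_of_le (by linarith) (le_max_left _ _)
      rw [← hseg τ hτK u (Or.inl h3) (fun _ => h1)]
      exact (hm u ⟨h2, h1⟩).1
    have hR : σ (τ+1) = Sp := by
      obtain ⟨u, h1, h2, h3⟩ : ∃ u, z < u ∧ u < z + ε ∧
          (((τ + 1 : ℕ) : ℕ∞) + 1 < K → u < t (τ+1+1)) := by
        by_cases h : (((τ + 1 : ℕ) : ℕ∞) + 1 < K)
        · have := tlt (τ+1) h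
          rw [← hz] at this
          refine ⟨min (z + ε/2) ((z + t (τ+1+1))/2), lt_min (by linarith) (by linarith),
            (min_le_left _ _).trans_lt (by linarith), fun _ =>
              (min_le_right _ _).trans_lt (by linarith)⟩
        · exact ⟨z + ε/2, by linarith, by linarith, fun h' => absurd h' h⟩
      rw [← hseg (τ+1) (by push_cast; exact hτ) u (Or.inl h1) h3]
      exact (hp u ⟨h1, h2⟩).1
    have hd := hne τ hτ
    by_cases hB : x z ∈ Bzero n
    · obtain ⟨h3, h4⟩ := h2 hB
      rw [hL, hR] at hd ⊢
      exact ⟨h4, fun h => absurd h hd, fun h => absurd h h3⟩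
    · exact absurd (by rw [hL, hR, h1 hB]) hd
  · have hle := not_lt.1 hτ
    have he := hlast τ hle
    have hKt : K ≠ ⊤ := by
      rintro rfl
      exact absurd hle (not_le.2 (by exact_mod_cast ENat.natCast_lt_top (τ+1)))
    obtain ⟨m', rfl⟩ := ENat.ne_top_iff_exists.1 hKt
    have hm1 : 1 ≤ m' := by exact_mod_cast hK1
    obtain ⟨m, rfl⟩ : ∃ m, m' = m + 1 := ⟨m' - 1, by omega⟩
    have hmτ : m ≤ τ := by
      have : m + 1 ≤ τ + 1 := by exact_mod_cast hle
      omega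
    have hall : ∀ k, m ≤ k → σ k = σ m := by
      intro k hk
      induction k, hk using Nat.le_induction with
      | base => rfl
      | succ k hk ih =>
        rw [hlast k (by exact_mod_cast Nat.succ_le_succ hk), ih]
    have hfix : f (σ m) = σ m := by
      apply hev _ (t m)
      intro u hu
      apply hseg m (by exact_mod_cast Nat.lt_succ_self m) u (Or.inl hu)
      intro h
      exfalso
      exact absurd h (by push_cast; exact lt_irrefl _)
    refine ⟨fun i => Or.inr (by rw [he]), ?_⟩
    rw [he, hall τ hmτ]
    exact ⟨fun _ => hfix, fun _ => rfl⟩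

noncomputable def esgn (b : Bool) : ℝ := if b then 1 else -1

lemma esgn_true : esgn true = 1 := rfl
lemma esgn_false : esgn false = -1 := by simp [esgn]

lemma esgn_flow (b : Bool) (X Y : ℝ) :
    esgn b * (gcub X + 6 * Lpl Y) = gcub (esgn b * X) + 6 * Lpl (esgn b * Y) := by
  cases b
  · rw [esgn_false, neg_one_mul, neg_one_mul, neg_one_mul, gcub_neg, Lpl_neg]; ring
  · rw [esgn_true]; simp

lemma esgn_flowQ (b : Bool) (Y q : ℝ) :
    esgn b * (gcub Y + 6 * q) = gcub (esgn b * Y) + 6 * (if b then q else 1 - q) := by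
  cases b
  · rw [esgn_false, neg_one_mul, neg_one_mul, gcub_neg]; simp; ring
  · rw [esgn_true]; simp

lemma esgn_pos {b : Bool} {X : ℝ} (h : 0 < esgn b * X) : decide (0 < X) = b ∧ X ≠ 0 := by
  cases b
  · rw [esgn_false] at h
    constructor
    · simp; linarith
    · intro h'; rw [h'] at h; simp at h
  · rw [esgn_true] at h
    constructor
    · simp; linarith
    · intro h'; rw [h'] at h; simp at h

lemma esgn_ne {a b : Bool} (h : a ≠ b) : esgn a = - esgn b := by
  cases a <;> cases b <;> simp_all [esgn]

lemma deriv_sign {φ : ℝ → ℝ} {D z : ℝ} (h : HasDerivAt φ D z) (h0 : φ z = 0) (hD : 0 < D) :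
    (∀ᶠ u in 𝓝[>] z, 0 < φ u) ∧ (∀ᶠ u in 𝓝[<] z, φ u < 0) := by
  have hs := (hasDerivAt_iff_tendsto_slope.1 h).eventually_const_lt hD
  constructor
  · have h1 : ∀ᶠ u in 𝓝[>] z, 0 < slope φ z u :=
      hs.filter_mono (nhdsWithin_mono z fun u (hu : z < u) => ne_of_gt hu)
    filter_upwards [h1, self_mem_nhdsWithin] with u hu hz
    rw [slope_def_field, h0, sub_zero] at hu
    have : 0 < u - z := sub_pos.2 hz
    exact (div_pos_iff_of_pos_right this).1 hu
  · have h1 : ∀ᶠ u in 𝓝[<] z, 0 < slope φ z u :=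
      hs.filter_mono (nhdsWithin_mono z fun u (hu : u < z) => ne_of_lt hu)
    filter_upwards [h1, self_mem_nhdsWithin] with u hu hz
    rw [slope_def_field, h0, sub_zero] at hu
    have : u - z < 0 := sub_neg.2 hz
    by_contra! hc
    have := div_nonpos_of_nonneg_of_nonpos hc this.le
    linarith

def PSt (n : ℕ) (s : Fin n → Bool) (a b : Fin n → ℝ) : Prop :=
  ∀ i, 1 ≤ esgn (s i) * a i ∧ 1/2 ≤ esgn (s i) * b i

def BP (n : ℕ) (f : (Fin n → Bool) → Fin n → Bool) (γ : Fin n → ℝ) (s : Fin n → Bool)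
    (a b : Fin n → ℝ) : Prop :=
  ∀ i, (f s i = s i → 0 < esgn (s i) * a i) ∧
    (f s i ≠ s i → a i = 0 → 0 < esgn (f s i) * (γ i * (gcub (a i) + 6 * Lpl (b i))))

lemma PSt_disc {n : ℕ} {s : Fin n → Bool} {a b : Fin n → ℝ} (h : PSt n s a b) :
    Sdisc n a = s := by
  funext i
  exact (esgn_pos (lt_of_lt_of_le one_pos (h i).1)).1

lemma mono1 {n : ℕ} {f : (Fin n → Bool) → Fin n → Bool} (hf : MonoStepping n f)
    {s r : Fin n → Bool} (h : ∀ i, f s i = s i → r i = s i) (hr : r ≠ f s) : f r = f s := by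
  have := hf s 0 r
  simp at this
  exact this h hr

lemma local_prop {n : ℕ} {f : (Fin n → Bool) → Fin n → Bool} (hf : MonoStepping n f)
    {γ γ' : Fin n → ℝ} {Q : (Fin n → ℝ) → Fin n → ℝ} {x y : ℝ → Fin n → ℝ}
    (hsol : IsSolD2 n γ γ' Q x y) {z : ℝ} (hz : 0 < z)
    {s : Fin n → Bool} (hB : BP n f γ s (x z) (y z)) :
    ∃ ε > 0, ∃ Sm Sp : Fin n → Bool,
      (∀ u ∈ Ioo (z - ε) z, Sdisc n (x u) = Sm ∧ x u ∉ Bzero n) ∧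
      (∀ u ∈ Ioo z (z + ε), Sdisc n (x u) = Sp ∧ x u ∉ Bzero n) ∧
      (x z ∉ Bzero n → Sm = Sp) ∧
      (x z ∈ Bzero n → Sm ≠ Sp ∧ f Sm ≠ Sm ∧ ∀ i, Sp i = f Sm i ∨ Sp i = Sm i) := by
  classical
  set Sm : Fin n → Bool := fun i => if x z i = 0 then s i else decide (0 < x z i) with hSm
  set Sp : Fin n → Bool := fun i => if x z i = 0 then f s i else decide (0 < x z i) with hSp
  have hnz : ∀ i, x z i ≠ 0 → ∀ᶠ u in 𝓝 z, decide (0 < x u i) = decide (0 < x z i) ∧ x u i ≠ 0 := by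
    intro i hi
    have hc := (hsol i z hz.le).1.continuousAt
    rcases lt_or_gt_of_ne hi with h | h
    · filter_upwards [hc.eventually_lt_const h] with u hu
      refine ⟨?_, hu.ne⟩
      rw [decide_eq_false (by linarith), decide_eq_false (by linarith)]
    · filter_upwards [hc.eventually_const_lt h] with u hu
      refine ⟨?_, hu.ne'⟩
      rw [decide_eq_true hu, decide_eq_true h]
  have hzne : ∀ i, x z i = 0 → f s i ≠ s i := by
    intro i h0 he
    have := (hB i).1 he
    rw [h0] at this
    simp at this
  have hzder : ∀ i, x z i = 0 → (∀ᶠ u in 𝓝[>] z, 0 < esgn (f s i) * x u i) ∧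
      (∀ᶠ u in 𝓝[<] z, esgn (f s i) * x u i < 0) := by
    intro i h0
    have h1 := (hB i).2 (hzne i h0) h0
    exact deriv_sign ((hsol i z hz.le).1.const_mul (esgn (f s i))) (by rw [h0, mul_zero]) h1
  have hR : ∀ᶠ u in 𝓝[>] z, ∀ i, decide (0 < x u i) = Sp i ∧ x u i ≠ 0 := by
    rw [eventually_all]
    intro i
    by_cases h0 : x z i = 0
    · filter_upwards [(hzder i h0).1] with u hu
      have := esgn_pos hu
      simpa [hSp, h0] using this
    · filter_upwards [(hnz i h0).filter_mono nhdsWithin_le_nhds] with u hu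
      rw [hSp]; simp only [if_neg h0]; exact hu
  have hL : ∀ᶠ u in 𝓝[<] z, ∀ i, decide (0 < x u i) = Sm i ∧ x u i ≠ 0 := by
    rw [eventually_all]
    intro i
    by_cases h0 : x z i = 0
    · filter_upwards [(hzder i h0).2] with u hu
      have : 0 < esgn (s i) * x u i := by
        rw [esgn_ne (hzne i h0).symm]; linarith
      have := esgn_pos this
      simpa [hSm, h0] using this
    · filter_upwards [(hnz i h0).filter_mono nhdsWithin_le_nhds] with u hu
      rw [hSm]; simp only [if_neg h0]; exact hu
  obtain ⟨l, hl, hl'⟩ := (mem_nhdsLT_iff_exists_Ioo_subset (a := z)).1 hL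
  obtain ⟨r, hr, hr'⟩ := (mem_nhdsGT_iff_exists_Ioo_subset (a := z)).1 hR
  simp only [mem_Iio, mem_Ioi] at hl hr
  refine ⟨min (z - l) (r - z), lt_min (by linarith) (by linarith), Sm, Sp, ?_, ?_, ?_, ?_⟩
  · intro u hu
    have hm := min_le_left (z - l) (r - z)
    have := hl' (show u ∈ Ioo l z from ⟨by linarith [hu.1], hu.2⟩)
    simp only [mem_setOf_eq] at this
    exact ⟨funext fun i => (this i).1, fun ⟨i, hi⟩ => (this i).2 hi⟩
  · intro u hu
    have hm := min_le_right (z - l) (r - z)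
    have := hr' (show u ∈ Ioo z r from ⟨hu.1, by linarith [hu.2]⟩)
    simp only [mem_setOf_eq] at this
    exact ⟨funext fun i => (this i).1, fun ⟨i, hi⟩ => (this i).2 hi⟩
  · intro h
    funext i
    have : x z i ≠ 0 := fun h' => h ⟨i, h'⟩
    simp [hSm, hSp, this]
  · rintro ⟨i0, hi0⟩
    have hmi : Sm i0 = s i0 := by simp [hSm, hi0]
    have hpi : Sp i0 = f s i0 := by simp [hSp, hi0]
    have hne : f s i0 ≠ s i0 := hzne i0 hi0
    have hSf : f Sm = f s := by
      apply mono1 hf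
      · intro i hi
        have := (hB i).1 hi
        obtain ⟨h1, h2⟩ := esgn_pos this
        simp [hSm, h2, h1]
      · intro h
        apply hne
        rw [← hmi, h]
    refine ⟨?_, ?_, ?_⟩
    · intro h
      have := congrFun h i0
      rw [hmi, hpi] at this
      exact hne this.symm
    · intro h
      rw [hSf] at h
      apply hne
      rw [← hmi, ← h]
    · intro i
      rw [hSf]
      by_cases h : x z i = 0
      · left; simp [hSp, h]
      · right; simp [hSp, hSm, h]

lemma phase_step {n : ℕ} {f : (Fin n → Bool) → Fin n → Bool} (hf : MonoStepping n f)
    {γ γ' : Fin n → ℝ} {Q : (Fin n → ℝ) → Fin n → ℝ} (hQ : IsConversion n f Q)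
    {x y : ℝ → Fin n → ℝ} {δ T μ : ℝ}
    (hsol : IsSolD2 n γ γ' Q x y) (hγ : ∀ i, 0 < γ i) (hγ' : ∀ i, 0 < γ' i ∧ γ' i < μ)
    (hδ : 0 < δ) (hδ' : δ ≤ 1/10) (hT : 0 < T) (hTγ : ∀ i, 2 ≤ γ i * (δ^2/2) * T)
    (h1 : 42 * μ * (n+1) * T ≤ δ^2/40) (h2 : 42 * μ ≤ 1) (h3 : 42 * 42 * 4 * n * T * μ ≤ 1)
    (hUC : ∀ p p' : Fin n → ℝ, (∀ i, |p i| ≤ 3) → (∀ i, |p' i| ≤ 3) →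
      (∀ i, |p i - p' i| ≤ 2 * δ) → ∀ i, |Q p i - Q p' i| ≤ 1/12)
    (hbox : ∀ u, 0 ≤ u → ∀ i, |x u i| ≤ 3)
    {t0 : ℝ} (ht0 : 0 ≤ t0) {s : Fin n → Bool} (hs : PSt n s (x t0) (y t0)) :
    ∃ t1, t0 + 1 ≤ t1 ∧ PSt n (f s) (x t1) (y t1) ∧
      ∀ u ∈ Icc t0 t1, BP n f γ s (x u) (y u) := by
  classical
  have hM : ∀ i, i ∈ (Finset.univ.filter fun i => f s i ≠ s i) ↔ f s i ≠ s i := by simp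
  have P : Phase n γ γ' (fun u i => esgn (f s i) * x u i) (fun u i => esgn (f s i) * y u i)
      (fun u i => if f s i then Q (x u) i else 1 - Q (x u) i)
      (Finset.univ.filter fun i => f s i ≠ s i) t0 δ T μ := by
    refine ⟨hγ, hγ', hδ, hδ', hT, hTγ, h1, h2, h3, ?_, ?_, ?_, ?_, ?_, ?_, ?_⟩
    · intro i u hu
      refine ((hsol i u (ht0.trans hu)).1.const_mul (esgn (f s i))).congr_deriv ?_
      rw [← esgn_flow]; ring
    · intro i u hu
      refine ((hsol i u (ht0.trans hu)).2.const_mul (esgn (f s i))).congr_deriv ?_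
      rw [← esgn_flowQ]; ring
    · intro u i
      have := hQ.2.1 (x u) i
      split_ifs <;> linarith [this.1, this.2]
    · intro u i
      have := hQ.2.1 (x u) i
      split_ifs <;> linarith [this.1, this.2]
    · intro i hi
      rw [hM, not_not] at hi
      rw [hi]
      exact hs i
    · intro i hi
      rw [hM] at hi
      rw [esgn_ne hi]
      have := hs i
      constructor <;> linarith
    · intro u hu hst hmv hex i
      simp only [hM] at hst hmv hex
      set r : Fin n → Bool := fun i => if 1 ≤ esgn (f s i) * x u i then f s i else s i with hr
      have hfr : f r = f s := by
        by_cases hfix : f s = s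
        · have : r = s := by
            funext i; simp [hr, hfix]
          rw [this]
        · apply mono1 hf
          · intro i hi
            simp [hr, hi]
          · intro h
            have hne : ∃ i, f s i ≠ s i := by
              by_contra! hall
              exact hfix (funext hall)
            obtain ⟨j, hj⟩ := hne
            obtain ⟨i, hi, hlt⟩ := hex ⟨j, (hM j).2 hj⟩
            have h4 := congrFun h i
            simp only [hr, if_neg (not_le.2 hlt)] at h4
            exact hi h4.symm
      have hrx : ∀ i, 1 - δ ≤ esgn (r i) * x u i := by
        intro i
        by_cases h : 1 ≤ esgn (f s i) * x u i
        · have : r i = f s i := by simp [hr, h]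
          rw [this]; linarith
        · have hri : r i = s i := by simp [hr, h]
          have hi : f s i ≠ s i := fun hi => h (hst i (by simpa using hi))
          have := (hmv i hi).resolve_right h
          rw [hri, esgn_ne hi.symm]
          linarith
      set p : Fin n → ℝ := fun i => if r i then max (x u i) (1 + δ) else min (x u i) (-1 - δ) with hp
      have hb := hbox u (ht0.trans hu)
      have hpr : ∀ i, |x u i - p i| ≤ 2 * δ ∧ |p i| ≤ 3 ∧
          (if r i then 1 < p i else p i < -1) := by
        intro i
        have hbi := abs_le.1 (hb i)
        have hri := hrx i
        rcases hbool : r i with _ | _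
        · have hpi : p i = min (x u i) (-1 - δ) := by simp [hp, hbool]
          rw [hbool, esgn_false] at hri
          rw [hpi]
          simp only [abs_le]
          rcases min_cases (x u i) (-1 - δ) with ⟨h, h'⟩ | ⟨h, h'⟩ <;> rw [h] <;>
            refine ⟨⟨?_, ?_⟩, ⟨?_, ?_⟩, ?_⟩ <;> (try simp) <;> linarith
        · have hpi : p i = max (x u i) (1 + δ) := by simp [hp, hbool]
          rw [hbool, esgn_true] at hri
          rw [hpi]
          simp only [abs_le]
          rcases max_cases (x u i) (1 + δ) with ⟨h, h'⟩ | ⟨h, h'⟩ <;> rw [h] <;>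
            refine ⟨⟨?_, ?_⟩, ⟨?_, ?_⟩, ?_⟩ <;> (try simp) <;> linarith
      have hq := hUC (x u) p hb (fun i => (hpr i).2.1) (fun i => (hpr i).1) i
      have hW := hQ.2.2 r p (fun i => (hpr i).2.2) i
      rw [hW, hfr, abs_le] at hq
      split_ifs at hq ⊢ <;> linarith [hq.1, hq.2]
  obtain ⟨t1, ht1, hend, hmid⟩ := P.core
  refine ⟨t1, ht1, hend, fun u hu i => ⟨fun hi => ?_, fun hi h0 => ?_⟩⟩
  · have := (hmid u hu i).1 (by simpa using hi)
    rwa [hi] at this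
  · have := (hmid u hu i).2 ((hM i).2 hi) (by simp [h0])
    rw [← esgn_flow] at this
    linarith

lemma box {n : ℕ} {γ γ' : Fin n → ℝ} {Q : (Fin n → ℝ) → Fin n → ℝ}
    {x y : ℝ → Fin n → ℝ} (hsol : IsSolD2 n γ γ' Q x y) (hγ : ∀ i, 0 < γ i)
    (h0 : ∀ i, |x 0 i| ≤ 3) : ∀ u, 0 ≤ u → ∀ i, |x u i| ≤ 3 := by
  intro u hu i
  have hi := abs_le.1 (h0 i)
  rw [abs_le]
  constructor
  · refine fence_const (X := fun u => x u i) hu (fun v hv => (hsol i v hv.1).1) hi.1 ?_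
    intro v _ h
    apply mul_pos (hγ i)
    have := Lpl_nonneg (y v i)
    rw [h]; unfold gcub; linarith
  · have := fence_const (X := fun u => - x u i) (c := -3) hu
      (fun v hv => (hsol i v hv.1).1.fun_neg) (by linarith) (fun v _ h => by
        have h3 : x v i = 3 := by linarith
        rw [← mul_neg]
        apply mul_pos (hγ i)
        have := Lpl_le_one (y v i)
        rw [h3]; unfold gcub; linarith)
    linarith

/-- main Theorem, part (iii): for a monotone-stepping `f`,
sufficient separation of time scales (`γ'ᵢ < μ`) makes `D₂(f, γ, Q)`
consistent with `f` on the universal open set `⋃_s U^s`. -/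
theorem stmt_9 (n : ℕ) (f : (Fin n → Bool) → Fin n → Bool)
    (hf : MonoStepping n f)
    (Q : (Fin n → ℝ) → Fin n → ℝ) (hQ : IsConversion n f Q)
    (γ : Fin n → ℝ) (hγ : ∀ i, 0 < γ i)
    (xm : ℝ) (hxm : gcub xm = 0) (hxmu : ∀ z, gcub z = 0 → z = xm) :
    ∃ μ : ℝ, 0 < μ ∧
    ∃ U : (Fin n → Bool) → Set ((Fin n → ℝ) × (Fin n → ℝ)),
      (∀ s, (U s).Nonempty ∧ IsOpen (U s) ∧
        U s ⊆ {p | p.1 ∈ Wset n s ∧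
          ∀ i, p.1 i ∈ Set.Icc xm (-xm) ∧ p.2 i ∈ Set.Icc xm (-xm)}) ∧
      ∀ γ' : Fin n → ℝ, (∀ i, 0 < γ' i ∧ γ' i < μ) →
      ∀ x y : ℝ → Fin n → ℝ, IsSolD2 n γ γ' Q x y →
      (x 0, y 0) ∈ ⋃ s, U s →
      (∃ σ : ℕ → Fin n → Bool, IsItinerary n x (Sdisc n) (Bzero n) σ) ∧
      (∀ σ : ℕ → Fin n → Bool, IsItinerary n x (Sdisc n) (Bzero n) σ →
        ∀ τ : ℕ,
          (∀ i, σ (τ + 1) i = f (σ τ) i ∨ σ (τ + 1) i = σ τ i) ∧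
          (σ (τ + 1) = σ τ ↔ f (σ τ) = σ τ)) := by
  classical
  -- uniform continuity
  obtain ⟨δ, hδ, hδ', hUC⟩ : ∃ δ : ℝ, 0 < δ ∧ δ ≤ 1/10 ∧
      ∀ p p' : Fin n → ℝ, (∀ i, |p i| ≤ 3) → (∀ i, |p' i| ≤ 3) →
      (∀ i, |p i - p' i| ≤ 2 * δ) → ∀ i, |Q p i - Q p' i| ≤ 1/12 := by
    have hK : IsCompact (Icc (fun _ : Fin n => (-3:ℝ)) (fun _ => 3)) := isCompact_Icc
    have huc := hK.uniformContinuousOn_of_continuous hQ.1.continuousOn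
    rw [Metric.uniformContinuousOn_iff] at huc
    obtain ⟨d, hd, h⟩ := huc (1/12) (by norm_num)
    refine ⟨min (1/10) (d/4), lt_min (by norm_num) (by linarith), min_le_left _ _, ?_⟩
    intro p p' hp hp' hpp i
    have hlt := h p ⟨fun i => (abs_le.1 (hp i)).1, fun i => (abs_le.1 (hp i)).2⟩
      p' ⟨fun i => (abs_le.1 (hp' i)).1, fun i => (abs_le.1 (hp' i)).2⟩
      ((dist_pi_lt_iff hd).2 fun i => by
        rw [Real.dist_eq]
        have := hpp i
        have := min_le_right (1/10) (d/4)
        linarith)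
    have := dist_le_pi_dist (Q p) (Q p') i
    rw [Real.dist_eq] at this
    linarith
  set T : ℝ := ∑ i, 4 / (γ i * δ^2) + 1 with hTdef
  have hpos : ∀ i, 0 < 4 / (γ i * δ^2) := fun i => by have := hγ i; positivity
  have hT : 0 < T := by
    have : 0 ≤ ∑ i, 4 / (γ i * δ^2) := Finset.sum_nonneg fun i _ => (hpos i).le
    linarith
  have hTγ : ∀ i, 2 ≤ γ i * (δ^2/2) * T := by
    intro i
    have h1 : 4 / (γ i * δ^2) ≤ ∑ i, 4 / (γ i * δ^2) :=
      Finset.single_le_sum (f := fun i => 4 / (γ i * δ^2)) (fun i _ => (hpos i).le) (Finset.mem_univ i)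
    have h2 : 4 / (γ i * δ^2) ≤ T := by linarith
    have h3 : 0 < γ i * δ^2 := by have := hγ i; positivity
    rw [div_le_iff₀ h3] at h2
    linarith
  set N : ℝ := (n:ℝ) with hN
  have hN0 : 0 ≤ N := Nat.cast_nonneg n
  set μ : ℝ := δ^2 / (100000 * ((N+1) * (T+1))) with hμ
  have hden : 0 < 100000 * ((N+1) * (T+1)) := by positivity
  have hμ0 : 0 < μ := by positivity
  have hμe : μ * (100000 * ((N+1) * (T+1))) = δ^2 := div_mul_cancel₀ _ hden.ne'
  have hδ2 : δ^2 ≤ 1/100 := by nlinarith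
  have e1 : 0 ≤ μ * N := by positivity
  have e2 : 0 ≤ μ * T := by positivity
  have e3 : 0 ≤ μ * N * T := by positivity
  have h1 : 42 * μ * (N+1) * T ≤ δ^2/40 := by nlinarith
  have h2 : 42 * μ ≤ 1 := by nlinarith
  have h3 : 42 * 42 * 4 * N * T * μ ≤ 1 := by nlinarith
  have hxm2 : xm ≤ -2 := by
    by_contra! h
    unfold gcub at hxm
    have : (xm - 1)^2 * (xm + 2) = -1 := by linarith [hxm, show (xm - 1)^2 * (xm + 2) = xm^3 - 3*xm + 2 by ring]
    have h4 : 0 ≤ (xm - 1)^2 * (xm + 2) := mul_nonneg (sq_nonneg _) (by linarith)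
    linarith
  refine ⟨μ, hμ0, fun s => {p | ∀ i, esgn (s i) * p.1 i ∈ Ioo (1:ℝ) 2 ∧ esgn (s i) * p.2 i ∈ Ioo (1:ℝ) 2},
    fun s => ⟨?_, ?_, ?_⟩, ?_⟩
  · refine ⟨(fun i => esgn (s i) * (3/2), fun i => esgn (s i) * (3/2)), fun i => ?_⟩
    rcases hb : s i with _ | _
    · simp only [hb, esgn_false, mem_Ioo]; norm_num
    · simp only [hb, esgn_true, mem_Ioo]; norm_num
  · have : {p : (Fin n → ℝ) × (Fin n → ℝ) | ∀ i, esgn (s i) * p.1 i ∈ Ioo (1:ℝ) 2 ∧ esgn (s i) * p.2 i ∈ Ioo (1:ℝ) 2}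
        = ⋂ i, ({p | esgn (s i) * p.1 i ∈ Ioo (1:ℝ) 2} ∩ {p | esgn (s i) * p.2 i ∈ Ioo (1:ℝ) 2}) := by
      ext p
      rw [mem_iInter]
      exact Iff.rfl
    beta_reduce
    rw [this]
    refine isOpen_iInter_of_finite fun i => IsOpen.inter ?_ ?_
    · exact isOpen_Ioo.preimage (f := fun p : (Fin n → ℝ) × (Fin n → ℝ) => esgn (s i) * p.1 i) (by fun_prop)
    · exact isOpen_Ioo.preimage (f := fun p : (Fin n → ℝ) × (Fin n → ℝ) => esgn (s i) * p.2 i) (by fun_prop)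
  · intro p hp
    refine ⟨fun i => ?_, fun i => ?_⟩
    · obtain ⟨⟨h1, h2⟩, h3, h4⟩ := hp i
      rcases hb : s i with _ | _
      · rw [hb, esgn_false] at h1
        simp only [Bool.false_eq_true, if_false]; linarith
      · rw [hb, esgn_true] at h1
        simp only [if_true]; linarith
    · obtain ⟨⟨h1, h2⟩, h3, h4⟩ := hp i
      rcases hb : s i with _ | _
      · rw [hb, esgn_false] at h1 h2 h3 h4
        exact ⟨⟨by linarith, by linarith⟩, by linarith, by linarith⟩
      · rw [hb, esgn_true] at h1 h2 h3 h4
        exact ⟨⟨by linarith, by linarith⟩, by linarith, by linarith⟩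
  intro γ' hγ' x y hsol hmem
  obtain ⟨s0, hs0⟩ := mem_iUnion.1 hmem
  have hs0' : ∀ i, esgn (s0 i) * x 0 i ∈ Ioo (1:ℝ) 2 ∧ esgn (s0 i) * y 0 i ∈ Ioo (1:ℝ) 2 := hs0
  have hP0 : PSt n s0 (x 0) (y 0) := fun i =>
    ⟨(hs0' i).1.1.le, by linarith [(hs0' i).2.1]⟩
  have hx0 : ∀ i, |x 0 i| ≤ 3 := by
    intro i
    obtain ⟨⟨h1, h2⟩, -⟩ := hs0' i
    rw [abs_le]
    rcases hb : s0 i with _ | _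
    · rw [hb, esgn_false] at h1 h2
      constructor <;> linarith
    · rw [hb, esgn_true] at h1 h2
      constructor <;> linarith
  have hbox := box hsol hγ hx0
  have step : ∀ {t0 : ℝ}, 0 ≤ t0 → ∀ {s : Fin n → Bool}, PSt n s (x t0) (y t0) →
      ∃ t1, t0 + 1 ≤ t1 ∧ PSt n (f s) (x t1) (y t1) ∧
      ∀ u ∈ Icc t0 t1, BP n f γ s (x u) (y u) := fun ht0 _ hs =>
    phase_step hf hQ hsol hγ hγ' hδ hδ' hT hTγ h1 h2 h3 hUC hbox ht0 hs
  have iter : ∀ k : ℕ, ∃ t : ℝ, (k:ℝ) ≤ t ∧ ∃ s, PSt n s (x t) (y t) ∧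
      ∀ u ∈ Icc 0 t, ∃ s, BP n f γ s (x u) (y u) := by
    intro k
    induction k with
    | zero =>
      obtain ⟨t1, ht1, -, hB⟩ := step le_rfl hP0
      refine ⟨0, by simp, s0, hP0, fun u hu => ⟨s0, hB u ⟨hu.1, ?_⟩⟩⟩
      linarith [hu.2]
    | succ k ih =>
      obtain ⟨t, ht, s, hs, hB⟩ := ih
      have ht0 : 0 ≤ t := (Nat.cast_nonneg k).trans ht
      obtain ⟨t1, ht1, hs1, hB1⟩ := step ht0 hs
      refine ⟨t1, by push_cast; linarith, f s, hs1, fun u hu => ?_⟩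
      rcases le_total u t with h | h
      · exact hB u ⟨hu.1, h⟩
      · exact ⟨s, hB1 u ⟨h, hu.2⟩⟩
  have hBP : ∀ u, 0 ≤ u → ∃ s, BP n f γ s (x u) (y u) := by
    intro u hu
    obtain ⟨k, hk⟩ := exists_nat_ge u
    obtain ⟨t, ht, s, -, hB⟩ := iter k
    exact hB u ⟨hu, hk.trans ht⟩
  have hloc : ∀ z : ℝ, 0 < z → ∃ ε > 0, ∃ Sm Sp : Fin n → Bool,
      (∀ u ∈ Ioo (z - ε) z, Sdisc n (x u) = Sm ∧ x u ∉ Bzero n) ∧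
      (∀ u ∈ Ioo z (z + ε), Sdisc n (x u) = Sp ∧ x u ∉ Bzero n) ∧
      (x z ∉ Bzero n → Sm = Sp) ∧
      (x z ∈ Bzero n → Sm ≠ Sp ∧ f Sm ≠ Sm ∧ ∀ i, Sp i = f Sm i ∨ Sp i = Sm i) := by
    intro z hz
    obtain ⟨s, hB⟩ := hBP z hz.le
    exact local_prop hf hsol hz hB
  have hev : ∀ (s : Fin n → Bool) (T' : ℝ), (∀ u, T' < u → Sdisc n (x u) = s) → f s = s := by
    intro s T' hT'
    obtain ⟨k, hk⟩ := exists_nat_gt T'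
    obtain ⟨t, ht, s', hs', -⟩ := iter k
    have ht0 : 0 ≤ t := (Nat.cast_nonneg k).trans ht
    obtain ⟨t1, ht1, hs1, -⟩ := step ht0 hs'
    have a1 := hT' t (by linarith)
    have a2 := hT' t1 (by linarith)
    rw [PSt_disc hs'] at a1
    rw [PSt_disc hs1] at a2
    rw [← a1] at a2 ⊢
    exact a2
  constructor
  · refine exists_itin (fun i u hu => (hsol i u hu).1.continuousAt.continuousWithinAt) ?_ ?_
    · have : ∀ᶠ u in 𝓝 (0:ℝ), ∀ i, x u i ≠ 0 := by
        rw [eventually_all]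
        intro i
        exact (hsol i 0 le_rfl).1.continuousAt.eventually_ne
          (esgn_pos (one_pos.trans (hs0' i).1.1)).2
      rw [Metric.eventually_nhds_iff] at this
      obtain ⟨ε, hε, h⟩ := this
      refine ⟨ε, hε, fun u hu hu' ⟨i, hi⟩ => h (y := u) ?_ i hi⟩
      rw [Real.dist_eq, sub_zero, abs_of_nonneg hu]; exact hu'
    · intro z hz
      obtain ⟨ε, hε, Sm, Sp, a, b, c, d⟩ := hloc z hz
      exact ⟨ε, hε, Sm, Sp, a, b, fun h => (d h).1⟩
  · intro σ hσ τ
    refine itin_prop f ?_ hev hσ τ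
    intro z hz
    obtain ⟨ε, hε, Sm, Sp, a, b, c, d⟩ := hloc z hz
    exact ⟨ε, hε, Sm, Sp, a, b, c, fun h => (d h).2⟩
end

section
/- Let f : {0,1}ⁿ → {0,1}ⁿ be a one-stepping Boolean system (H(s, f(s)) ≤ 1 for all s), let Q : ℝⁿ → [0,1]ⁿ be a continuous conversConversion of f, and let γ₁,…,γₙ > 0 be fixed. Then there exist μ > 0 and, for each s ∈ {0,1}ⁿ, a nonempty open set U^s ⊆ W^s ∩ [x⁻, x⁺]^{2n} such that for every choice of γ_{n+1},…,γ_{2n} ∈ (0, μ), every solution x of D₂(f,γ,Q) with x(0) ∈ ⋃_{s∈{0,1}ⁿ} U^s is strongly consistent with f: x has the transversality property and its Boolean itinerary s^x satisfies s^x(τ+1) = f(s^x(τ)) for all τ ≥ 0. -/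
noncomputable def hh (x : ℝ) : ℝ := 3 * x - x ^ 3
noncomputable def MM (y : ℝ) : ℝ := 6 * Lpl y - 3
noncomputable def sg (b : Bool) : ℝ := if b then 1 else -1

lemma MM_neg (y : ℝ) : MM (-y) = - MM y := by
  unfold MM Lpl; split_ifs <;> linarith
lemma MM_le (y : ℝ) : MM y ≤ 3 := by
  unfold MM Lpl; split_ifs <;> linarith
lemma MM_ge (y : ℝ) : -3 ≤ MM y := by
  unfold MM Lpl; split_ifs <;> linarith
lemma MM_pos {y : ℝ} (h : 0 ≤ y) : 0 ≤ MM y := by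
  unfold MM Lpl; split_ifs <;> linarith
lemma MM_le_of {y c : ℝ} (h : y ≤ c) (hc : -1 ≤ c) : MM y ≤ 3 * c := by
  unfold MM Lpl; split_ifs <;> linarith
lemma MM_le_inv {y : ℝ} (h : MM y ≤ -2) : y ≤ -(2/3) := by
  unfold MM Lpl at h; split_ifs at h <;> linarith

lemma hh_le {x : ℝ} (h : -2 ≤ x) : hh x ≤ 2 := by
  unfold hh; nlinarith [mul_nonneg (sq_nonneg (x-1)) (by linarith : 0 ≤ x + 2)]
lemma hh_le' {x δ : ℝ} (h1 : -1 ≤ x) (h2 : x ≤ 1 - δ) (hδ : 0 < δ) (hδ1 : δ ≤ 1/2) :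
    hh x ≤ 2 - 2 * δ ^ 2 := by
  have e1 : hh x ≤ hh (1 - δ) := by
    unfold hh
    have : 0 ≤ (1 - δ - x) * (3 - ((1-δ)^2 + (1-δ)*x + x^2)) := by
      apply mul_nonneg (by linarith)
      nlinarith
    nlinarith
  have e2 : hh (1 - δ) ≤ 2 - 2 * δ ^ 2 := by
    unfold hh; nlinarith [mul_nonneg (sq_nonneg δ) (by linarith : 0 ≤ 1 - δ)]
  linarith
lemma hh_nonneg {x : ℝ} (h1 : 0 ≤ x) (h2 : x ≤ 1) : 0 ≤ hh x := by
  unfold hh; nlinarith [mul_nonneg h1 (mul_nonneg (by linarith : 0 ≤ 1 - x) (by linarith : 0 ≤ 1 + x))]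
lemma hh_abs {x : ℝ} (h1 : -3 ≤ x) (h2 : x ≤ 3) : hh x ≤ 18 ∧ -18 ≤ hh x := by
  unfold hh
  constructor <;> nlinarith [sq_nonneg x, sq_nonneg (x+3), sq_nonneg (x-3), mul_nonneg (by linarith : 0 ≤ 3 - x) (by linarith : 0 ≤ x + 3), mul_nonneg (by linarith : 0 ≤ 3 - x) (sq_nonneg x), mul_nonneg (by linarith : 0 ≤ 3 + x) (sq_nonneg x), mul_nonneg (by linarith : 0 ≤ 3 + x) (sq_nonneg (2*x-3)), mul_nonneg (by linarith : 0 ≤ 3 - x) (sq_nonneg (2*x+3))]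

lemma sg_sq (b : Bool) : sg b * sg b = 1 := by cases b <;> simp [sg]
lemma sg_X (b : Bool) (x y : ℝ) : sg b * (gcub x + 6 * Lpl y) = hh (sg b * x) + MM (sg b * y) := by
  cases b
  · have := MM_neg y
    simp only [sg, hh, gcub, Bool.false_eq_true, if_false, neg_mul, one_mul, this]
    unfold MM; ring
  · simp [sg, hh, gcub, MM]; ring
lemma sg_Y (b : Bool) (y q : ℝ) : sg b * (gcub y + 6 * q) = hh (sg b * y) + sg b * (6 * q - 3) := by
  cases b <;> simp [sg, hh, gcub] <;> ring

lemma ev_gt {u : ℝ → ℝ} {d t : ℝ} (h : HasDerivAt u d t) (hd : 0 < d) :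
    ∀ᶠ z in nhdsWithin t (Set.Ioi t), u t < u z := by
  have h1 := (hasDerivAt_iff_tendsto_slope.1 h).eventually (lt_mem_nhds hd)
  have h2 : ∀ᶠ z in nhdsWithin t (Set.Ioi t), 0 < slope u t z :=
    h1.filter_mono (nhdsWithin_mono _ (fun z hz => ne_of_gt hz))
  filter_upwards [h2, self_mem_nhdsWithin] with z hz hzt
  have hzt' : t < z := hzt
  rw [slope_def_field, lt_div_iff₀ (by linarith)] at hz
  linarith

lemma barrier {ι : Type*} [Finite ι] (φ φ' : ι → ℝ → ℝ) (a b : ℝ)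
    (hc : ∀ k, ∀ t ∈ Set.Icc a b, HasDerivAt (φ k) (φ' k t) t) (h0 : ∀ k, 0 ≤ φ k a)
    (hd : ∀ t ∈ Set.Ico a b, (∀ k, 0 ≤ φ k t) → ∀ k, φ k t = 0 → 0 < φ' k t) :
    ∀ t ∈ Set.Icc a b, ∀ k, 0 ≤ φ k t := by
  have key : Set.Icc a b ⊆ {t | ∀ k, 0 ≤ φ k t} := by
    apply IsClosed.Icc_subset_of_forall_mem_nhdsWithin
    · have : {t | ∀ k, 0 ≤ φ k t} ∩ Set.Icc a b =
          Set.Icc a b ∩ ⋂ k, (Set.Icc a b ∩ φ k ⁻¹' Set.Ici 0) := by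
        ext t
        simp only [Set.mem_inter_iff, Set.mem_ofPred_eq, Set.mem_iInter, Set.mem_preimage,
          Set.mem_Ici]
        exact ⟨fun h => ⟨h.2, fun k => ⟨h.2, h.1 k⟩⟩, fun h => ⟨fun k => (h.2 k).2, h.1⟩⟩
      rw [this]
      refine isClosed_Icc.inter (isClosed_iInter fun k => ?_)
      exact ContinuousOn.preimage_isClosed_of_isClosed
        (fun t ht => (hc k t ht).continuousAt.continuousWithinAt) isClosed_Icc isClosed_Ici
    · exact h0
    · rintro t ⟨ht, hI⟩
      have : ∀ k, ∀ᶠ z in nhdsWithin t (Set.Ioi t), 0 ≤ φ k z := by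
        intro k
        have hd1 := hc k t ⟨hI.1, hI.2.le⟩
        rcases (ht k).lt_or_eq with h | h
        · exact ((hd1.continuousAt.eventually (lt_mem_nhds h)).filter_mono nhdsWithin_le_nhds).mono
            (fun z hz => le_of_lt hz)
        · filter_upwards [ev_gt hd1 (hd t hI ht k h.symm)] with z hz
          linarith [ht k]
      exact Filter.eventually_all.2 this
  exact key

lemma barrier1 (u u' : ℝ → ℝ) (a b c : ℝ)
    (hc : ∀ t ∈ Set.Icc a b, HasDerivAt u (u' t) t) (h0 : c ≤ u a)
    (hd : ∀ t ∈ Set.Ico a b, u t = c → 0 < u' t) :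
    ∀ t ∈ Set.Icc a b, c ≤ u t := by
  intro t ht
  have := barrier (ι := Unit) (fun _ t => u t - c) (fun _ t => u' t) a b
    (fun _ t ht => (hc t ht).sub_const c) (fun _ => by simpa using h0)
    (fun t ht _ _ h => hd t ht (by linarith)) t ht ()
  linarith

lemma barrier1' (u u' : ℝ → ℝ) (a b c : ℝ)
    (hc : ∀ t ∈ Set.Icc a b, HasDerivAt u (u' t) t) (h0 : u a ≤ c)
    (hd : ∀ t ∈ Set.Ico a b, u t = c → u' t < 0) :
    ∀ t ∈ Set.Icc a b, u t ≤ c := by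
  intro t ht
  have := barrier1 (fun t => - u t) (fun t => - u' t) a b (-c) (fun t ht => (hc t ht).neg)
    (by linarith) (fun t ht h => by have := hd t ht (by linarith); linarith) t ht
  linarith

lemma first_hit (u : ℝ → ℝ) (a b c : ℝ) (hu : ContinuousOn u (Set.Icc a b)) (hab : a ≤ b)
    (ha : c < u a) (hb : u b ≤ c) :
    ∃ T ∈ Set.Ioc a b, u T = c ∧ ∀ t ∈ Set.Ico a T, c < u t := by
  have hcl : IsClosed (Set.Icc a b ∩ u ⁻¹' Set.Iic c) :=
    hu.preimage_isClosed_of_isClosed isClosed_Icc isClosed_Iic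
  have hcp : IsCompact (Set.Icc a b ∩ u ⁻¹' Set.Iic c) :=
    isCompact_Icc.of_isClosed_subset hcl Set.inter_subset_left
  obtain ⟨T, ⟨hT1, hT2⟩, hT3⟩ := hcp.exists_isLeast ⟨b, ⟨hab, le_refl b⟩, hb⟩
  have hT2' : u T ≤ c := hT2
  have haT : a < T := by
    rcases hT1.1.lt_or_eq with h | h
    · exact h
    · exfalso; rw [← h] at hT2'; linarith
  have hlt : ∀ t ∈ Set.Ico a T, c < u t := by
    intro t ht
    by_contra hcon
    have := hT3 ⟨⟨ht.1, ht.2.le.trans hT1.2⟩, not_lt.1 hcon⟩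
    linarith [ht.2]
  refine ⟨T, ⟨haT, hT1.2⟩, ?_, hlt⟩
  have hsub : Set.Icc a T ⊆ Set.Icc a b := Set.Icc_subset_Icc_right hT1.2
  obtain ⟨z, hz, hzc⟩ := intermediate_value_Icc' haT.le (hu.mono hsub) ⟨hT2', ha.le⟩
  rcases hz.2.lt_or_eq with h | h
  · have := hlt z ⟨hz.1, h⟩; linarith
  · rw [← h]; exact hzc

lemma last_hit (u : ℝ → ℝ) (a b c : ℝ) (hu : ContinuousOn u (Set.Icc a b)) (hab : a ≤ b)
    (ha : c ≤ u a) (hb : u b < c) :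
    ∃ T ∈ Set.Ico a b, u T = c ∧ ∀ t ∈ Set.Ioc T b, u t < c := by
  obtain ⟨T, hT, h1, h2⟩ := first_hit (fun t => - u (-t)) (-b) (-a) (-c)
    (by
      apply ContinuousOn.neg
      apply hu.comp continuousOn_neg
      intro t ht
      exact ⟨by linarith [ht.2], by linarith [ht.1]⟩) (by linarith) (by simpa using hb) (by simpa using ha)
  refine ⟨-T, ⟨by linarith [hT.2], by linarith [hT.1]⟩, by linarith, ?_⟩
  intro t ht
  have := h2 (-t) ⟨by linarith [ht.2], by linarith [ht.1]⟩
  simp only [neg_neg] at this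
  linarith

lemma mv_le (u u' : ℝ → ℝ) (a b C : ℝ) (hab : a ≤ b)
    (hc : ∀ t ∈ Set.Icc a b, HasDerivAt u (u' t) t) (hd : ∀ t ∈ Set.Icc a b, u' t ≤ C) :
    u b ≤ u a + C * (b - a) := by
  have := (convex_Icc a b).image_sub_le_mul_sub_of_deriv_le (f := u) (C := C)
    (fun t ht => (hc t ht).continuousAt.continuousWithinAt)
    (fun t ht => (hc t (interior_subset ht)).differentiableAt.differentiableWithinAt)
    (fun t ht => by rw [(hc t (interior_subset ht)).deriv]; exact hd t (interior_subset ht))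
    a ⟨le_refl a, hab⟩ b ⟨hab, le_refl b⟩ hab
  linarith

lemma mv_ge (u u' : ℝ → ℝ) (a b C : ℝ) (hab : a ≤ b)
    (hc : ∀ t ∈ Set.Icc a b, HasDerivAt u (u' t) t) (hd : ∀ t ∈ Set.Icc a b, C ≤ u' t) :
    u a + C * (b - a) ≤ u b := by
  have := mv_le (fun t => - u t) (fun t => - u' t) a b (-C) hab (fun t ht => (hc t ht).neg)
    (fun t ht => by have := hd t ht; linarith)
  linarith

structure Sys (n : ℕ) (γ γ' : Fin n → ℝ) (δ : ℝ) (fl : Fin n → Prop)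
    (X Y P : ℝ → Fin n → ℝ) : Prop where
  γp : ∀ j, 0 < γ j
  γp' : ∀ j, 0 < γ' j
  δ0 : 0 < δ
  δ1 : δ ≤ 1/2
  dX : ∀ t, 0 ≤ t → ∀ j, HasDerivAt (fun u => X u j) (γ j * (hh (X t j) + MM (Y t j))) t
  dY : ∀ t, 0 ≤ t → ∀ j, HasDerivAt (fun u => Y u j) (γ' j * (hh (Y t j) + P t j)) t
  bP : ∀ t, 0 ≤ t → ∀ j, -3 ≤ P t j ∧ P t j ≤ 3
  bX : ∀ t, 0 ≤ t → ∀ j, -3 ≤ X t j ∧ X t j ≤ 3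
  bY : ∀ t, 0 ≤ t → ∀ j, -3 ≤ Y t j ∧ Y t j ≤ 3
  hP : ∀ t, 0 ≤ t → (∀ j, 1 - δ ≤ X t j) → ∀ j, (fl j → P t j ≤ -(5/2)) ∧ (¬ fl j → 5/2 ≤ P t j)

namespace Sys
variable {n : ℕ} {γ γ' : Fin n → ℝ} {δ : ℝ} {fl : Fin n → Prop} {X Y P : ℝ → Fin n → ℝ}

lemma stageA (S : Sys n γ γ' δ fl X Y P) (a b : ℝ) (ha : 0 ≤ a) (e κ : Fin n → ℝ)
    (h0X : ∀ j, ¬ fl j → 1 ≤ X a j) (h0Y : ∀ j, ¬ fl j → 1/3 - e j ≤ Y a j)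
    (he : ∀ j, e j ≤ 1/12) (hκ0 : ∀ j, 0 ≤ κ j) (hκ1 : ∀ j, κ j ≤ 2 * γ' j)
    (hκ2 : ∀ j, κ j * (b - a) ≤ e j)
    (hfl : ∀ t ∈ Set.Icc a b, ∀ j, fl j → 1 - δ ≤ X t j) :
    ∀ t ∈ Set.Icc a b, ∀ j, ¬ fl j → 1 ≤ X t j ∧ 1/3 - e j + κ j * (t - a) ≤ Y t j := by
  have key := barrier (ι := {j // ¬ fl j} ⊕ {j // ¬ fl j})
    (fun k t => Sum.elim (fun j => X t j.1 - 1) (fun j => Y t j.1 - κ j.1 * (t - a) - (1/3 - e j.1)) k)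
    (fun k t => Sum.elim (fun j => γ j.1 * (hh (X t j.1) + MM (Y t j.1)))
      (fun j => γ' j.1 * (hh (Y t j.1) + P t j.1) - κ j.1) k) a b ?_ ?_ ?_
  · intro t ht j hj
    have h1 := key t ht (Sum.inl ⟨j, hj⟩)
    have h2 := key t ht (Sum.inr ⟨j, hj⟩)
    simp only [Sum.elim_inl, Sum.elim_inr] at h1 h2
    constructor <;> linarith
  · rintro (j | j) t ht
    · exact (S.dX t (ha.trans ht.1) j.1).sub_const 1
    · have h := ((S.dY t (ha.trans ht.1) j.1).sub (((hasDerivAt_id t).sub_const a).const_mul (κ j.1))).sub_const (1/3 - e j.1)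
      simpa using h
  · rintro (j | j)
    · simpa using h0X j.1 j.2
    · simpa using h0Y j.1 j.2
  · intro t ht hall
    have ht0 : 0 ≤ t := ha.trans ht.1
    have hXall : ∀ j, ¬ fl j → 1 ≤ X t j := fun j hj => by
      have h1 := hall (Sum.inl ⟨j, hj⟩)
      simp only [Sum.elim_inl] at h1
      linarith
    have hYall : ∀ j, ¬ fl j → 1/3 - e j + κ j * (t - a) ≤ Y t j := fun j hj => by
      have h1 := hall (Sum.inr ⟨j, hj⟩)
      simp only [Sum.elim_inr] at h1
      linarith
    have hκt : ∀ j, 0 ≤ κ j * (t - a) := fun j => mul_nonneg (hκ0 j) (by linarith [ht.1])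
    have hPt := S.hP t ht0 (fun j => by
      by_cases hj : fl j
      · exact hfl t ⟨ht.1, ht.2.le⟩ j hj
      · have := hXall j hj; have := S.δ0; linarith)
    rintro (j | j) hj
    · simp only [Sum.elim_inl] at hj ⊢
      have e1 : X t j.1 = 1 := by linarith
      have e2 : 0 ≤ MM (Y t j.1) := MM_pos (by linarith [hYall j.1 j.2, he j.1, hκt j.1])
      apply mul_pos (S.γp _)
      rw [e1]; unfold hh; linarith
    · simp only [Sum.elim_inr] at hj ⊢
      have e1 : κ j.1 * (t - a) ≤ κ j.1 * (b - a) :=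
        mul_le_mul_of_nonneg_left (by linarith [ht.2]) (hκ0 _)
      have e2 := hκ2 j.1
      have e3 := he j.1
      have e4 := hκt j.1
      have e5 := hh_nonneg (x := Y t j.1) (by linarith) (by linarith)
      have e6 := (hPt j.1).2 j.2
      have := S.γp' j.1
      have := hκ1 j.1
      nlinarith

lemma yrate (S : Sys n γ γ' δ fl X Y P) (t : ℝ) (ht : 0 ≤ t) (j : Fin n) :
    -(21 * γ' j) ≤ γ' j * (hh (Y t j) + P t j) ∧ γ' j * (hh (Y t j) + P t j) ≤ 21 * γ' j := by
  have h1 := hh_abs (S.bY t ht j).1 (S.bY t ht j).2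
  have h2 := S.bP t ht j
  have h3 := S.γp' j
  constructor <;> nlinarith

lemma exists_T (S : Sys n γ γ' δ fl X Y P) (a : ℝ) (ha : 0 ≤ a) (i : Fin n) (hi : ∀ j, fl j ↔ j = i)
    (e : Fin n → ℝ) (he0 : ∀ j, 0 ≤ e j) (he : ∀ j, e j ≤ 1/12)
    (h0X : ∀ j, 1 ≤ X a j) (h0Y : ∀ j, 1/3 - e j ≤ Y a j) :
    ∃ T, a < T ∧ X T i = 1 - δ ∧ ∀ t ∈ Set.Ico a T, 1 - δ < X t i := by
  have hδ := S.δ0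
  by_cases hex : ∃ b, a ≤ b ∧ X b i ≤ 1 - δ
  · obtain ⟨b, hb, hbX⟩ := hex
    obtain ⟨T, hT, h1, h2⟩ := first_hit (fun t => X t i) a b (1 - δ)
      (fun t ht => (S.dX t (ha.trans ht.1) i).continuousAt.continuousWithinAt) hb
      (by have := h0X i; linarith) hbX
    exact ⟨T, hT.1, h1, h2⟩
  · exfalso
    push Not at hex
    have hA : ∀ t, a ≤ t → ∀ j, 1 - δ ≤ X t j := by
      intro t ht j
      by_cases hj : fl j
      · rw [(hi j).1 hj]; exact (hex t ht).le
      · have := (S.stageA a t ha e (fun _ => 0) (fun j _ => h0X j) (fun j _ => h0Y j) he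
          (fun _ => le_refl _) (fun j => by have := S.γp' j; linarith) (fun j => by simpa using he0 j)
          (fun z hz k hk => by rw [(hi k).1 hk]; exact (hex z hz.1).le) t ⟨ht, le_refl t⟩ j hj).1
        linarith
    have hPi : ∀ t, a ≤ t → P t i ≤ -(5/2) := fun t ht =>
      (S.hP t (ha.trans ht) (hA t ht) i).1 ((hi i).2 rfl)
    have hg' := S.γp' i
    have hg := S.γp i
    -- Y reaches -1
    have hY : ∃ b, a ≤ b ∧ Y b i ≤ -1 := by
      by_contra hcon
      push Not at hcon
      have hab : a ≤ a + 8 / γ' i := by have : 0 < 8 / γ' i := by positivity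
                                        linarith
      have := mv_le (fun t => Y t i) _ a (a + 8 / γ' i) (-(γ' i / 2)) hab
        (fun t ht => S.dY t (ha.trans ht.1) i) (fun t ht => by
          have h1 := hh_le (x := Y t i) (by linarith [hcon t ht.1])
          have h2 := hPi t ht.1
          nlinarith)
      have h3 := hcon _ hab
      have h4 := (S.bY a ha i).2
      have h5 : -(γ' i / 2) * (a + 8 / γ' i - a) = -4 := by field_simp; ring
      simp only [h5] at this
      linarith
    obtain ⟨b, hab, hb⟩ := hY
    have hb0 : 0 ≤ b := ha.trans hab
    have hYs : ∀ t, b ≤ t → Y t i ≤ -1 := fun t ht =>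
      barrier1' (fun t => Y t i) _ b t (-1) (fun z hz => S.dY z (hb0.trans hz.1) i) hb
        (fun z hz h => by
          have h1 := hh_le (x := Y z i) (by linarith)
          have h2 := hPi z (hab.trans hz.1)
          nlinarith) t ⟨ht, le_refl t⟩
    have hbb : b ≤ b + 4 / γ i := by have : 0 < 4 / γ i := by positivity
                                     linarith
    have := mv_le (fun t => X t i) _ b (b + 4 / γ i) (-(γ i)) hbb
        (fun t ht => S.dX t (hb0.trans ht.1) i) (fun t ht => by
          have h1 := hh_le (x := X t i) (by linarith [hex t (hab.trans ht.1), S.δ1])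
          have h2 := MM_le_of (hYs t ht.1) (le_refl _)
          nlinarith)
    have h3 := hex _ (hab.trans hbb)
    have h4 := (S.bX b hb0 i).2
    have h5 : -(γ i) * (b + 4 / γ i - b) = -4 := by field_simp; ring
    simp only [h5] at this
    linarith [S.δ1]

lemma step (S : Sys n γ γ' δ fl X Y P) (a : ℝ) (ha : 0 ≤ a) (i : Fin n) (hi : ∀ j, fl j ↔ j = i)
    (TB : ℝ) (hTB0 : 0 < TB) (hTB : 2 ≤ γ i * δ ^ 2 * TB)
    (hμ1 : ∀ j, 21 * γ' j * TB ≤ δ ^ 2 / 3) (hμ2 : ∀ j, γ' j * (21 * (1 + 11 * TB)) ≤ 11 / 12)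
    (h0X : ∀ j, 1 ≤ X a j) (h0Y : ∀ j, 1/3 - 21 * γ' j * TB ≤ Y a j) :
    ∃ b c, a < b ∧ b < c ∧ a + 1 ≤ c ∧ (∀ t ∈ Set.Ico a b, ∀ j, 0 < X t j) ∧
      (∀ t ∈ Set.Ioc b c, X t i < 0 ∧ ∀ j, j ≠ i → 0 < X t j) ∧
      X c i ≤ -1 ∧ Y c i ≤ -(1/3) ∧
      ∀ j, j ≠ i → 1 ≤ X c j ∧ 1/3 - 21 * γ' j * TB ≤ Y c j := by
  have hδ := S.δ0
  have hδ1 := S.δ1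
  have hg := S.γp i
  have hgi := S.γp' i
  have hδ2 : δ ^ 2 / 3 ≤ 1 / 12 := by nlinarith
  have hfi : fl i := (hi i).2 rfl
  have he0 : ∀ j, 0 ≤ 21 * γ' j * TB := fun j => by have := S.γp' j; positivity
  have he : ∀ j, 21 * γ' j * TB ≤ 1 / 12 := fun j => (hμ1 j).trans hδ2
  obtain ⟨T, haT, hT1, hT2⟩ := S.exists_T a ha i hi (fun j => 21 * γ' j * TB) he0 he h0X h0Y
  have hT0 : 0 ≤ T := ha.trans haT.le
  have hT3 : ∀ t ∈ Set.Icc a T, 1 - δ ≤ X t i := by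
    intro t ht
    rcases ht.2.lt_or_eq with h | h
    · exact (hT2 t ⟨ht.1, h⟩).le
    · rw [h, hT1]
  -- last time at level 1
  obtain ⟨t1, ht1, hX1, hX2⟩ := last_hit (fun t => X t i) a T 1
    (fun t ht => (S.dX t (ha.trans ht.1) i).continuousAt.continuousWithinAt) haT.le (h0X i)
    (by linarith)
  have ht10 : 0 ≤ t1 := ha.trans ht1.1
  have hY1 : Y t1 i ≤ -(2/3) := by
    apply MM_le_inv
    by_contra hcon
    have hd := S.dX t1 ht10 i
    have hpos : 0 < γ i * (hh (X t1 i) + MM (Y t1 i)) := by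
      apply mul_pos hg
      rw [hX1]; unfold hh; linarith
    have h1 := ev_gt hd hpos
    have h2 : ∀ᶠ z in nhdsWithin t1 (Set.Ioi t1), z ∈ Set.Ioc t1 T := Ioc_mem_nhdsGT ht1.2
    obtain ⟨z, hz1, hz2⟩ := (h1.and h2).exists
    have := hX2 z hz2
    linarith
  -- duration
  have hdur : 1 + 11 * TB ≤ t1 - a := by
    have h1 := mv_ge (fun t => Y t i) _ a t1 (-(21 * γ' i)) ht1.1
      (fun t ht => S.dY t (ha.trans ht.1) i) (fun t ht => (S.yrate t (ha.trans ht.1) i).1)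
    try simp only at h1
    have h2 := h0Y i
    have h3 := he i
    have h4 := hμ2 i
    have h5 : γ' i * (21 * (1 + 11 * TB)) ≤ γ' i * (21 * (t1 - a)) := by linarith
    have h6 := le_of_mul_le_mul_left h5 hgi
    linarith
  have hTa : 1 + 11 * TB ≤ T - a := by linarith [ht1.2]
  -- stage A
  have hA := S.stageA a T ha (fun j => 21 * γ' j * TB) (fun j => 21 * γ' j * TB / (T - a))
    (fun j _ => h0X j) (fun j _ => h0Y j) he
    (fun j => div_nonneg (he0 j) (by linarith))
    (fun j => by
      rw [div_le_iff₀ (by linarith)]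
      have := S.γp' j
      nlinarith)
    (fun j => by rw [div_mul_cancel₀ _ (by linarith)])
    (fun t ht j hj => by rw [(hi j).1 hj]; exact hT3 t ht)
  have hAX : ∀ t ∈ Set.Icc a T, ∀ j, 1 - δ ≤ X t j := by
    intro t ht j
    by_cases hj : fl j
    · rw [(hi j).1 hj]; exact hT3 t ht
    · linarith [(hA t ht j hj).1]
  have hYT : Y T i ≤ -(2/3) := barrier1' (fun t => Y t i) _ t1 T (-(2/3))
    (fun z hz => S.dY z (ht10.trans hz.1) i) hY1
    (fun z hz h => by
      have h1 := hh_le (x := Y z i) (by linarith)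
      have h2 := (S.hP z (ht10.trans hz.1) (hAX z ⟨ht1.1.trans hz.1, hz.2.le⟩) i).1 hfi
      nlinarith) T ⟨ht1.2.le, le_refl T⟩
  have hYj : ∀ j, j ≠ i → 1/3 ≤ Y T j := by
    intro j hj
    have := (hA T ⟨haT.le, le_refl T⟩ j (fun h => hj ((hi j).1 h))).2
    rw [div_mul_cancel₀ _ (by linarith)] at this
    linarith
  have hXj : ∀ j, j ≠ i → 1 ≤ X T j := fun j hj =>
    (hA T ⟨haT.le, le_refl T⟩ j (fun h => hj ((hi j).1 h))).1
  -- stage B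
  have hYB : ∀ t ∈ Set.Icc T (T + TB), ∀ j, Y T j - 21 * γ' j * TB ≤ Y t j ∧ Y t j ≤ Y T j + 21 * γ' j * TB := by
    intro t ht j
    have hj := S.γp' j
    have h1 := mv_ge (fun t => Y t j) _ T t (-(21 * γ' j)) ht.1
      (fun z hz => S.dY z (hT0.trans hz.1) j) (fun z hz => (S.yrate z (hT0.trans hz.1) j).1)
    have h2 := mv_le (fun t => Y t j) _ T t ((21 * γ' j)) ht.1
      (fun z hz => S.dY z (hT0.trans hz.1) j) (fun z hz => (S.yrate z (hT0.trans hz.1) j).2)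
    have h3 : 21 * γ' j * (t - T) ≤ 21 * γ' j * TB :=
      mul_le_mul_of_nonneg_left (by linarith [ht.2]) (by positivity)
    try simp only at h1 h2
    constructor <;> linarith
  have hYBi : ∀ t ∈ Set.Icc T (T + TB), Y t i ≤ -(2/3) + δ ^ 2 / 3 := fun t ht => by
    linarith [(hYB t ht i).2, hμ1 i]
  have hMi : ∀ t ∈ Set.Icc T (T + TB), MM (Y t i) ≤ -2 + δ ^ 2 := fun t ht => by
    have := MM_le_of (hYBi t ht) (by nlinarith)
    linarith
  have hYBj : ∀ t ∈ Set.Icc T (T + TB), ∀ j, j ≠ i → 1/3 - 21 * γ' j * TB ≤ Y t j := fun t ht j hj => by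
    linarith [(hYB t ht j).1, hYj j hj]
  have hXBj : ∀ t ∈ Set.Icc T (T + TB), ∀ j, j ≠ i → 1 ≤ X t j := fun t ht j hj =>
    barrier1 (fun t => X t j) _ T (T + TB) 1 (fun z hz => S.dX z (hT0.trans hz.1) j) (hXj j hj)
      (fun z hz h => by
        have e2 : 0 ≤ MM (Y z j) := MM_pos (by linarith [hYBj z ⟨hz.1, hz.2.le⟩ j hj, he j])
        apply mul_pos (S.γp _)
        try simp only at h
        rw [h]; unfold hh; linarith) t ht
  have hδp : 0 < δ ^ 2 := by positivity
  have hXle : ∀ t ∈ Set.Icc T (T + TB), X t i ≤ 1 - δ := fun t ht =>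
    barrier1' (fun t => X t i) _ T (T + TB) (1 - δ) (fun z hz => S.dX z (hT0.trans hz.1) i) hT1.le
      (fun z hz h => by
        try simp only at h
        have e1 := hh_le' (x := X z i) (by linarith) h.le hδ hδ1
        have e2 := hMi z ⟨hz.1, hz.2.le⟩
        nlinarith) t ht
  have hrate : ∀ t ∈ Set.Icc T (T + TB), -1 ≤ X t i →
      γ i * (hh (X t i) + MM (Y t i)) ≤ -(γ i * δ ^ 2) := fun t ht h => by
    have e1 := hh_le' h (hXle t ht) hδ hδ1
    have e2 := hMi t ht
    nlinarith
  have hex : ∃ c ∈ Set.Icc T (T + TB), X c i ≤ -1 := by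
    by_contra hcon
    push Not at hcon
    have h1 := mv_le (fun t => X t i) _ T (T + TB) (-(γ i * δ ^ 2)) (by linarith)
      (fun t ht => S.dX t (hT0.trans ht.1) i) (fun t ht => hrate t ht (hcon t ht).le)
    have h2 := hcon (T + TB) ⟨by linarith, le_refl _⟩
    try simp only at h1
    have h3 : -(γ i * δ ^ 2) * (T + TB - T) = -(γ i * δ ^ 2 * TB) := by ring
    rw [h3] at h1
    linarith
  obtain ⟨c', hc', hc'X⟩ := hex
  have hcont : ∀ c', ContinuousOn (fun t => X t i) (Set.Icc T c') :=
    fun c' t ht => (S.dX t (hT0.trans ht.1) i).continuousAt.continuousWithinAt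
  obtain ⟨c, hc, hcX, hcX'⟩ := first_hit (fun t => X t i) T c' (-1) (hcont c') hc'.1
    (by linarith) hc'X
  have hcI : ∀ t ∈ Set.Icc T c, t ∈ Set.Icc T (T + TB) := fun t ht =>
    ⟨ht.1, ht.2.trans (hc.2.trans hc'.2)⟩
  have hge : ∀ t ∈ Set.Icc T c, -1 ≤ X t i := by
    intro t ht
    rcases ht.2.lt_or_eq with h | h
    · exact (hcX' t ⟨ht.1, h⟩).le
    · rw [h, hcX]
  have hanti : ∀ t ∈ Set.Icc T c, ∀ z ∈ Set.Icc T c, t < z → X z i < X t i := by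
    intro t ht z hz htz
    have h1 := mv_le (fun t => X t i) _ t z (-(γ i * δ ^ 2)) htz.le
      (fun w hw => S.dX w (hT0.trans (ht.1.trans hw.1)) i)
      (fun w hw => by
        have hw' : w ∈ Set.Icc T c := ⟨ht.1.trans hw.1, hw.2.trans hz.2⟩
        exact hrate w (hcI w hw') (hge w hw'))
    have h2 : 0 < γ i * δ ^ 2 * (z - t) := mul_pos (mul_pos hg hδp) (by linarith)
    try simp only at h1
    linarith
  obtain ⟨b, hb, hbX⟩ := intermediate_value_Icc' hc.1.le (hcont c) (show (0:ℝ) ∈ Set.Icc (X c i) (X T i) from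
    ⟨by linarith, by linarith⟩)
  try simp only at hbX
  have hTb : T < b := by
    rcases hb.1.lt_or_eq with h | h
    · exact h
    · exfalso; rw [← h, hT1] at hbX; linarith
  have hbc : b < c := by
    rcases hb.2.lt_or_eq with h | h
    · exact h
    · exfalso; rw [h, hcX] at hbX; linarith
  have hcc : c ∈ Set.Icc T c := ⟨hc.1.le, le_refl c⟩
  refine ⟨b, c, haT.trans hTb, hbc, by linarith, ?_, ?_, hcX.le, ?_, ?_⟩
  · intro t ht j
    by_cases htT : t ≤ T
    · linarith [hAX t ⟨ht.1, htT⟩ j]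
    · have htI : t ∈ Set.Icc T c := ⟨by linarith, by linarith [ht.2]⟩
      by_cases hj : j = i
      · rw [hj, ← hbX]; exact hanti t htI b hb ht.2
      · linarith [hXBj t (hcI t htI) j hj]
  · intro t ht
    have htI : t ∈ Set.Icc T c := ⟨by linarith [ht.1], ht.2⟩
    refine ⟨?_, fun j hj => ?_⟩
    · rw [← hbX]; exact hanti b hb t htI ht.1
    · linarith [hXBj t (hcI t htI) j hj]
  · linarith [hYBi c (hcI c hcc)]
  · intro j hj
    exact ⟨hXBj c (hcI c hcc) j hj, hYBj c (hcI c hcc) j hj⟩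

end Sys

lemma itin_aux {P : Type*} {n : ℕ} {x : ℝ → P} {S : P → Fin n → Bool}
    {σ σ' : ℕ → Fin n → Bool} {K K' : ℕ∞} {t t' : ℕ → ℝ}
    (hK' : 1 ≤ K') (h0 : t 0 = 0) (h0' : t' 0 = 0)
    (hm : ∀ k : ℕ, ((k : ℕ∞) + 1) < K → t k < t (k + 1))
    (hm' : ∀ k : ℕ, ((k : ℕ∞) + 1) < K' → t' k < t' (k + 1))
    (hS : ∀ k : ℕ, (k : ℕ∞) < K → ∀ u : ℝ,
      (t k < u ∨ (k = 0 ∧ u = 0)) → (∀ _ : ((k : ℕ∞) + 1) < K, u < t (k + 1)) →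
      S (x u) = σ k)
    (hS' : ∀ k : ℕ, (k : ℕ∞) < K' → ∀ u : ℝ,
      (t' k < u ∨ (k = 0 ∧ u = 0)) → (∀ _ : ((k : ℕ∞) + 1) < K', u < t' (k + 1)) →
      S (x u) = σ' k)
    (hne : ∀ k : ℕ, ((k : ℕ∞) + 1) < K → σ (k + 1) ≠ σ k)
    (hne' : ∀ k : ℕ, ((k : ℕ∞) + 1) < K' → σ' (k + 1) ≠ σ' k) :
    ∀ k : ℕ, (k : ℕ∞) < K → (k : ℕ∞) < K' ∧ t k = t' k ∧ σ k = σ' k := by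
  -- a point just after `t k`, below a prescribed bound, inside the interval
  have pick : ∀ (K : ℕ∞) (t : ℕ → ℝ), (∀ k : ℕ, ((k : ℕ∞) + 1) < K → t k < t (k + 1)) →
      ∀ k : ℕ, ∃ B, t k < B ∧ ∀ u, u < B → (∀ _ : ((k : ℕ∞) + 1) < K, u < t (k + 1)) := by
    intro K t hm k
    by_cases h : ((k : ℕ∞) + 1) < K
    · exact ⟨t (k+1), hm k h, fun u hu _ => hu⟩
    · exact ⟨t k + 1, by linarith, fun u hu h' => absurd h' h⟩
  have same : ∀ k : ℕ, (k : ℕ∞) < K → (k : ℕ∞) < K' → t k = t' k → σ k = σ' k := by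
    intro k hk hk' he
    obtain ⟨B, hB, hB1⟩ := pick K t hm k
    obtain ⟨B', hB', hB1'⟩ := pick K' t' hm' k
    obtain ⟨u, hu1, hu2⟩ := exists_between (lt_min hB (he ▸ hB'))
    rw [← hS k hk u (Or.inl hu1) (hB1 u (hu2.trans_le (min_le_left _ _))),
      ← hS' k hk' u (Or.inl (he ▸ hu1)) (hB1' u (hu2.trans_le (min_le_right _ _)))]
  intro k
  induction k with
  | zero =>
    intro hk
    have hk' : ((0 : ℕ) : ℕ∞) < K' := by
      exact lt_of_lt_of_le (by simp) hK'
    have he : t 0 = t' 0 := by rw [h0, h0']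
    exact ⟨hk', he, same 0 hk hk' he⟩
  | succ k ih =>
    intro hk
    have hkc : ((k : ℕ∞) + 1) < K := by exact_mod_cast hk
    have hk0 : (k : ℕ∞) < K := lt_of_le_of_lt le_self_add hkc
    obtain ⟨hk', he, hσ⟩ := ih hk0
    have hlt := hm k hkc
    obtain ⟨B, hB, hB1⟩ := pick K t hm (k+1)
    have hkc' : ((k : ℕ∞) + 1) < K' := by
      by_contra hcon
      obtain ⟨u, hu1, hu2⟩ := exists_between hB
      have e1 := hS (k+1) hk u (Or.inl hu1) (hB1 u hu2)
      have e2 := hS' k hk' u (Or.inl (by rw [← he]; linarith)) (fun h => absurd h hcon)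
      exact hne k hkc (by rw [← e1, e2, hσ])
    have hk1' : ((k + 1 : ℕ) : ℕ∞) < K' := by exact_mod_cast hkc'
    have hlt' := hm' k hkc'
    have het : t (k+1) = t' (k+1) := by
      rcases lt_trichotomy (t (k+1)) (t' (k+1)) with h | h | h
      · exfalso
        obtain ⟨u, hu1, hu2⟩ := exists_between (lt_min hB h)
        have e1 := hS (k+1) hk u (Or.inl hu1) (hB1 u (hu2.trans_le (min_le_left _ _)))
        have e2 := hS' k hk' u (Or.inl (by rw [← he]; linarith))
          (fun _ => hu2.trans_le (min_le_right _ _))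
        exact hne k hkc (by rw [← e1, e2, hσ])
      · exact h
      · exfalso
        obtain ⟨B', hB', hB1'⟩ := pick K' t' hm' (k+1)
        obtain ⟨u, hu1, hu2⟩ := exists_between (lt_min hB' h)
        have e1 := hS' (k+1) hk1' u (Or.inl hu1) (hB1' u (hu2.trans_le (min_le_left _ _)))
        have e2 := hS k hk0 u (Or.inl (by rw [he]; linarith))
          (fun _ => hu2.trans_le (min_le_right _ _))
        exact hne' k hkc' (by rw [← e1, e2, hσ])
    exact ⟨hk1', het, same (k+1) hk hk1' het⟩

lemma itin_unique {P : Type*} {n : ℕ} {x : ℝ → P} {S : P → Fin n → Bool} {B : Set P}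
    {σ σ' : ℕ → Fin n → Bool} (h : IsItinerary n x S B σ) (h' : IsItinerary n x S B σ') :
    σ = σ' := by
  obtain ⟨K, t, hK, h0, hm, -, -, hS, hne, hc⟩ := h
  obtain ⟨K', t', hK', h0', hm', -, -, hS', hne', hc'⟩ := h'
  have A := itin_aux hK' h0 h0' hm hm' hS hS' hne hne'
  have A' := itin_aux hK h0' h0 hm' hm hS' hS hne' hne
  funext k
  induction k with
  | zero => exact (A 0 (lt_of_lt_of_le (by simp) hK)).2.2
  | succ k ih =>
    by_cases hk : ((k + 1 : ℕ) : ℕ∞) < K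
    · exact (A _ hk).2.2
    · have hk' : ¬ ((k + 1 : ℕ) : ℕ∞) < K' := fun h => hk (A' _ h).1
      rw [hc k (by exact_mod_cast not_lt.1 hk), hc' k (by exact_mod_cast not_lt.1 hk'), ih]

lemma itin_exists {n : ℕ} (x : ℝ → Fin n → ℝ) (f : (Fin n → Bool) → Fin n → Bool)
    (Start : (Fin n → Bool) → ℝ → Prop)
    (hstep : ∀ s a, 0 ≤ a → Start s a → ∃ b c, a < b ∧ b < c ∧ a + 1 ≤ c ∧ Start (f s) c ∧
      (∀ t ∈ Set.Ico a b, Sdisc n (x t) = s ∧ x t ∉ Bzero n) ∧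
      (∀ t ∈ Set.Ioc b c, Sdisc n (x t) = f s ∧ x t ∉ Bzero n))
    (hfix : ∀ s a, 0 ≤ a → Start s a → f s = s → ∀ t, a ≤ t → Sdisc n (x t) = s ∧ x t ∉ Bzero n)
    (s0 : Fin n → Bool) (h0 : Start s0 0) :
    IsItinerary n x (Sdisc n) (Bzero n) (fun k => f^[k] s0) := by
  choose! b c hab hbc hac hst hS1 hS2 using hstep
  obtain ⟨a, a0, asucc⟩ : ∃ a : ℕ → ℝ, a 0 = 0 ∧ ∀ k, a (k+1) = c (f^[k] s0) (a k) :=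
    ⟨fun k => Nat.rec (motive := fun _ => ℝ) 0 (fun k r => c (f^[k] s0) r) k, rfl, fun _ => rfl⟩
  have hinv : ∀ k : ℕ, (k : ℝ) ≤ a k ∧ Start (f^[k] s0) (a k) := by
    intro k
    induction k with
    | zero => simp [a0, h0]
    | succ k ih =>
      have hk0 : 0 ≤ a k := le_trans (Nat.cast_nonneg k) ih.1
      rw [asucc, Function.iterate_succ_apply']
      refine ⟨?_, hst _ _ hk0 ih.2⟩
      have := hac _ _ hk0 ih.2
      push_cast
      linarith [ih.1]
  have hn : ∀ k, 0 ≤ a k := fun k => le_trans (Nat.cast_nonneg k) (hinv k).1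
  let β : ℕ → ℝ := fun k => b (f^[k] s0) (a k)
  have h1 : ∀ k, a k < β k := fun k => hab _ _ (hn k) (hinv k).2
  have h2 : ∀ k, β k < a (k+1) := fun k => by rw [asucc]; exact hbc _ _ (hn k) (hinv k).2
  have h3 : ∀ k, ∀ t ∈ Set.Ico (a k) (β k), Sdisc n (x t) = f^[k] s0 ∧ x t ∉ Bzero n :=
    fun k => hS1 _ _ (hn k) (hinv k).2
  have h4 : ∀ k, ∀ t ∈ Set.Ioc (β k) (a (k+1)), Sdisc n (x t) = f^[k+1] s0 ∧ x t ∉ Bzero n :=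
    fun k => by
      rw [asucc, Function.iterate_succ_apply']
      exact hS2 _ _ (hn k) (hinv k).2
  have h5 : ∀ k, f (f^[k] s0) = f^[k] s0 → ∀ t, a k ≤ t → Sdisc n (x t) = f^[k] s0 ∧ x t ∉ Bzero n :=
    fun k hk => hfix _ _ (hn k) (hinv k).2 hk
  have ham : Monotone a := monotone_nat_of_le_succ (fun k => ((h1 k).trans (h2 k)).le)
  let t : ℕ → ℝ := fun k => match k with
    | 0 => 0
    | k+1 => β k
  have t0 : t 0 = 0 := rfl
  have tsucc : ∀ k, t (k+1) = β k := fun k => rfl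
  have htlt : ∀ k, t k < t (k+1) := by
    intro k
    cases k with
    | zero => rw [t0, tsucc, ← a0]; exact h1 0
    | succ k => rw [tsucc, tsucc]; exact (h2 k).trans (h1 (k+1))
  have hloc : ∀ m u, 0 ≤ u → u < a m → ∃ k < m, a k ≤ u ∧ u < a (k+1) := by
    intro m u hu
    induction m with
    | zero => intro h; rw [a0] at h; linarith
    | succ m ih =>
      intro h
      by_cases hc : u < a m
      · obtain ⟨k, hk, h⟩ := ih hc
        exact ⟨k, by omega, h⟩
      · exact ⟨m, by omega, not_lt.1 hc, h⟩
  have hoff : ∀ m u, 0 ≤ u → u < a m → (∀ k, 1 ≤ k → k ≤ m → u ≠ t k) → x u ∉ Bzero n := by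
    intro m u hu hum hne
    obtain ⟨k, hk, hk1, hk2⟩ := hloc m u hu hum
    have := hne (k+1) (by omega) (by omega)
    rw [tsucc] at this
    rcases lt_or_gt_of_ne this with h | h
    · exact (h3 k u ⟨hk1, h⟩).2
    · exact (h4 k u ⟨h, hk2.le⟩).2
  have hconst : ∀ k u, (t k < u ∨ (k = 0 ∧ u = 0)) → (u < t (k+1) ∨ f (f^[k] s0) = f^[k] s0) →
      Sdisc n (x u) = f^[k] s0 := by
    intro k u hu1 hu2
    by_cases hak : a k ≤ u
    · rcases hu2 with h | h
      · exact (h3 k u ⟨hak, h⟩).1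
      · exact (h5 k h u hak).1
    · cases k with
      | zero =>
        exfalso; rw [a0] at hak; rw [t0] at hu1
        rcases hu1 with h | h
        · linarith
        · linarith [h.2]
      | succ k =>
        rcases hu1 with h | h
        · exact (h4 k u ⟨h, (not_le.1 hak).le⟩).1
        · omega
  by_cases hex : ∃ m, f (f^[m] s0) = f^[m] s0
  · classical
    let m := Nat.find hex
    have hm : f (f^[m] s0) = f^[m] s0 := Nat.find_spec hex
    have hmin : ∀ k, k < m → f (f^[k] s0) ≠ f^[k] s0 := fun k hk => Nat.find_min hex hk
    have hstay : ∀ k, m ≤ k → f (f^[k] s0) = f^[k] s0 := by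
      intro k hk
      induction k, hk using Nat.le_induction with
      | base => exact hm
      | succ k hk ih => rw [Function.iterate_succ_apply', ih, ih]
    have c1 : ∀ k : ℕ, ((k : ℕ∞) < ((m + 1 : ℕ) : ℕ∞)) ↔ k < m + 1 := fun k => Nat.cast_lt
    have c2 : ∀ k : ℕ, ((k : ℕ∞) + 1 < ((m + 1 : ℕ) : ℕ∞)) ↔ k + 1 < m + 1 := fun k => by
      rw [← c1]; push_cast; rfl
    refine ⟨((m + 1 : ℕ) : ℕ∞), t, by simp, t0, fun k _ => htlt k, ?_, ?_, ?_, ?_, ?_⟩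
    · intro h; exact absurd h (ENat.natCast_ne_top _)
    · intro u hu hne
      by_cases hum : u < a m
      · exact hoff m u hu hum (fun k hk1 hk2 => hne k hk1 ((c1 k).2 (by omega)))
      · exact (h5 m hm u (not_lt.1 hum)).2
    · intro k hk u hu1 hu2
      apply hconst k u hu1
      by_cases hkm : k < m
      · exact Or.inl (hu2 ((c2 k).2 (by omega)))
      · exact Or.inr (hstay k (not_lt.1 hkm))
    · intro k hk
      have := (c2 k).1 hk
      simp only [Function.iterate_succ_apply']
      exact hmin k (by omega)
    · intro k hk
      simp only [Function.iterate_succ_apply']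
      apply hstay
      by_contra hcon
      exact absurd hk (not_le.2 ((c2 k).2 (by omega)))
  · push Not at hex
    refine ⟨⊤, t, le_top, t0, fun k _ => htlt k, ?_, ?_, ?_, ?_, ?_⟩
    · intro _
      rw [← Filter.tendsto_add_atTop_iff_nat 1]
      refine Filter.tendsto_atTop_mono (fun k => ?_) tendsto_natCast_atTop_atTop
      rw [tsucc]
      exact (hinv k).1.trans (h1 k).le
    · intro u hu hne
      obtain ⟨m, hm⟩ := exists_nat_gt u
      exact hoff m u hu (hm.trans_le (hinv m).1) (fun k hk _ => hne k hk (ENat.natCast_lt_top k))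
    · intro k hk u hu1 hu2
      exact hconst k u hu1 (Or.inl (hu2 (by exact_mod_cast ENat.natCast_lt_top (k+1))))
    · intro k hk
      simp only [Function.iterate_succ_apply']
      exact hex k
    · intro k hk
      exfalso
      have := ENat.natCast_lt_top (k+1)
      push_cast at this
      exact absurd hk (not_le.2 this)

lemma exists_delta {n : ℕ} {f : (Fin n → Bool) → Fin n → Bool} {Q : (Fin n → ℝ) → Fin n → ℝ}
    (hQ : IsConversion n f Q) : ∃ δ : ℝ, 0 < δ ∧ δ ≤ 1/2 ∧ ∀ s : Fin n → Bool, ∀ x : Fin n → ℝ,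
      (∀ j, -3 ≤ x j ∧ x j ≤ 3) → (∀ j, 1 - δ ≤ sg (s j) * x j) →
      ∀ i, |Q x i - if f s i then 1 else 0| ≤ 1/12 := by
  obtain ⟨hc, -, hW⟩ := hQ
  have hK : IsCompact (Set.univ.pi fun _ : Fin n => Set.Icc (-3:ℝ) 3) :=
    isCompact_univ_pi fun _ => isCompact_Icc
  have hu := hK.uniformContinuousOn_of_continuous hc.continuousOn
  rw [Metric.uniformContinuousOn_iff] at hu
  obtain ⟨d, hd, hdu⟩ := hu (1/12) (by norm_num)
  refine ⟨min (1/2) (d/4), by positivity, min_le_left _ _, ?_⟩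
  intro s x hx hs i
  set δ := min (1/2) (d/4) with hδ
  have hδ0 : 0 < δ := by positivity
  have hδ1 : δ ≤ 1/2 := min_le_left _ _
  have hδ2 : δ ≤ d/4 := min_le_right _ _
  let z : Fin n → ℝ := fun j => if s j then max (x j) (1 + δ) else min (x j) (-(1 + δ))
  have hz : z ∈ Wset n s := by
    intro j
    have : (1:ℝ) < 1 + δ := by linarith
    cases hsj : s j <;> simp [z, hsj] <;> right <;> linarith
  have hz0 : ∀ j, s j = false → z j = min (x j) (-(1 + δ)) := fun j h => if_neg (by simp [h])
  have hz1 : ∀ j, s j = true → z j = max (x j) (1 + δ) := fun j h => if_pos h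
  have hzI : ∀ j, z j ∈ Set.Icc (-3:ℝ) 3 := by
    intro j
    have hxj := hx j
    cases hsj : s j
    · rw [hz0 j hsj]
      rcases min_choice (x j) (-(1 + δ)) with h | h <;> rw [h] <;> constructor <;> linarith
    · rw [hz1 j hsj]
      rcases max_choice (x j) (1 + δ) with h | h <;> rw [h] <;> constructor <;> linarith
  have hdist : dist x z < d := by
    refine lt_of_le_of_lt ((dist_pi_le_iff (by positivity : 0 ≤ 2 * δ)).2 fun j => ?_) (by linarith)
    rw [Real.dist_eq, abs_le]
    have h1 := hs j
    cases hsj : s j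
    · rw [hz0 j hsj]
      simp only [hsj, sg, Bool.false_eq_true, if_false] at h1
      rcases min_cases (x j) (-(1 + δ)) with ⟨h, h'⟩ | ⟨h, h'⟩ <;> rw [h] <;> constructor <;> linarith
    · rw [hz1 j hsj]
      simp only [hsj, sg, if_true] at h1
      rcases max_cases (x j) (1 + δ) with ⟨h, h'⟩ | ⟨h, h'⟩ <;> rw [h] <;> constructor <;> linarith
  have hQd := hdu x (fun j _ => hx j) z (fun j _ => hzI j) hdist
  have := (dist_le_pi_dist (Q x) (Q z) i).trans hQd.le
  rw [Real.dist_eq, hW s z hz i] at this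
  exact this

lemma xm_lt {xm : ℝ} (hxm : gcub xm = 0) : xm < -2 := by
  unfold gcub at hxm
  by_contra h
  have : 0 ≤ xm + 2 := by linarith
  nlinarith [mul_nonneg this (sq_nonneg (xm - 1))]

lemma box_X {u w : ℝ → ℝ} {g : ℝ} (hg : 0 < g) (hw : ∀ t, 0 ≤ t → -3 ≤ w t ∧ w t ≤ 3)
    (hd : ∀ t, 0 ≤ t → HasDerivAt u (g * (hh (u t) + w t)) t) (h0 : -3 ≤ u 0 ∧ u 0 ≤ 3) :
    ∀ t, 0 ≤ t → -3 ≤ u t ∧ u t ≤ 3 := by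
  intro t ht
  constructor
  · refine barrier1 u _ 0 t (-3) (fun z hz => hd z hz.1) h0.1 (fun z hz h => ?_) t ⟨ht, le_refl t⟩
    apply mul_pos hg
    rw [h]; unfold hh; linarith [(hw z hz.1).1]
  · refine barrier1' u _ 0 t 3 (fun z hz => hd z hz.1) h0.2 (fun z hz h => ?_) t ⟨ht, le_refl t⟩
    apply mul_neg_of_pos_of_neg hg
    rw [h]; unfold hh; linarith [(hw z hz.1).2]

lemma sg_box (b : Bool) {x c : ℝ} (h : -c ≤ x ∧ x ≤ c) : -c ≤ sg b * x ∧ sg b * x ≤ c := by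
  cases b <;> simp [sg] <;> constructor <;> linarith [h.1, h.2]

lemma sg_not (b : Bool) : sg (!b) = - sg b := by cases b <;> simp [sg]

lemma disc_of {n : ℕ} {x : Fin n → ℝ} {s : Fin n → Bool} (h : ∀ j, 0 < sg (s j) * x j) :
    Sdisc n x = s ∧ x ∉ Bzero n := by
  constructor
  · funext j
    have := h j
    unfold Sdisc
    cases hs : s j
    · simp [sg, hs] at this ⊢; linarith
    · simp [sg, hs] at this ⊢; linarith
  · rintro ⟨j, hj⟩
    have := h j
    rw [hj] at this
    simp at this

lemma mkSys {n : ℕ} {f : (Fin n → Bool) → Fin n → Bool} {Q : (Fin n → ℝ) → Fin n → ℝ}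
    (hQ : IsConversion n f Q) {γ γ' : Fin n → ℝ} (hγ : ∀ i, 0 < γ i) (hγ' : ∀ i, 0 < γ' i)
    {δ : ℝ} (hδ : 0 < δ) (hδ1 : δ ≤ 1/2)
    (hδQ : ∀ s : Fin n → Bool, ∀ x : Fin n → ℝ,
      (∀ j, -3 ≤ x j ∧ x j ≤ 3) → (∀ j, 1 - δ ≤ sg (s j) * x j) →
      ∀ i, |Q x i - if f s i then 1 else 0| ≤ 1/12)
    {x y : ℝ → Fin n → ℝ} (hsol : IsSolD2 n γ γ' Q x y)
    (bx : ∀ j, ∀ t, 0 ≤ t → -3 ≤ x t j ∧ x t j ≤ 3) (hby : ∀ j, ∀ t, 0 ≤ t → -3 ≤ y t j ∧ y t j ≤ 3)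
    (s : Fin n → Bool) :
    Sys n γ γ' δ (fun j => f s j ≠ s j) (fun t j => sg (s j) * x t j) (fun t j => sg (s j) * y t j)
      (fun t j => sg (s j) * (6 * Q (x t) j - 3)) where
  γp := hγ
  γp' := hγ'
  δ0 := hδ
  δ1 := hδ1
  dX := fun t ht j => by
    have := (hsol j t ht).1.const_mul (sg (s j))
    exact this.congr_deriv (by rw [← sg_X]; ring)
  dY := fun t ht j => by
    have := (hsol j t ht).2.const_mul (sg (s j))
    exact this.congr_deriv (by rw [← sg_Y]; ring)
  bP := fun t ht j => by
    have := hQ.2.1 (x t) j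
    exact sg_box _ ⟨by linarith [this.1], by linarith [this.2]⟩
  bX := fun t ht j => sg_box _ (bx j t ht)
  bY := fun t ht j => sg_box _ (hby j t ht)
  hP := fun t ht h j => by
    have h1 := abs_le.1 (hδQ s (x t) (fun j => bx j t ht) h j)
    cases hs : s j <;> cases hfs : f s j <;> simp [hs, hfs, sg] at h1 ⊢ <;> linarith [h1.1, h1.2]

/-- main Theorem, part (iv): for a one-stepping `f`
(`H(s, f(s)) ≤ 1` for all `s`), sufficient separation of time scales makes
`D₂(f, γ, Q)` strongly consistent with `f` on the universal open set
`⋃_s U^s`. -/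
theorem stmt_10 (n : ℕ) (f : (Fin n → Bool) → Fin n → Bool)
    (hf : ∀ s : Fin n → Bool, hammingDist s (f s) ≤ 1)
    (Q : (Fin n → ℝ) → Fin n → ℝ) (hQ : IsConversion n f Q)
    (γ : Fin n → ℝ) (hγ : ∀ i, 0 < γ i)
    (xm : ℝ) (hxm : gcub xm = 0) (hxmu : ∀ z, gcub z = 0 → z = xm) :
    ∃ μ : ℝ, 0 < μ ∧
    ∃ U : (Fin n → Bool) → Set ((Fin n → ℝ) × (Fin n → ℝ)),
      (∀ s, (U s).Nonempty ∧ IsOpen (U s) ∧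
        U s ⊆ {p | p.1 ∈ Wset n s ∧
          ∀ i, p.1 i ∈ Set.Icc xm (-xm) ∧ p.2 i ∈ Set.Icc xm (-xm)}) ∧
      ∀ γ' : Fin n → ℝ, (∀ i, 0 < γ' i ∧ γ' i < μ) →
      ∀ x y : ℝ → Fin n → ℝ, IsSolD2 n γ γ' Q x y →
      (x 0, y 0) ∈ ⋃ s, U s →
      (∃ σ : ℕ → Fin n → Bool, IsItinerary n x (Sdisc n) (Bzero n) σ) ∧
      (∀ σ : ℕ → Fin n → Bool, IsItinerary n x (Sdisc n) (Bzero n) σ →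
        ∀ τ : ℕ, σ (τ + 1) = f (σ τ)) := by
  obtain ⟨δ, hδ, hδ1, hδQ⟩ := exists_delta hQ
  have hδ2 : 0 < δ ^ 2 := by positivity
  have hterm : ∀ j, 0 < 2 / (γ j * δ ^ 2) := fun j => by have := hγ j; positivity
  set TB : ℝ := ∑ j, 2 / (γ j * δ ^ 2) + 1 with hTBdef
  have hTB0 : 0 < TB := by
    have : 0 ≤ ∑ j, 2 / (γ j * δ ^ 2) := Finset.sum_nonneg fun j _ => (hterm j).le
    linarith
  have hTB : ∀ i, 2 ≤ γ i * δ ^ 2 * TB := by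
    intro i
    have h1 : 2 / (γ i * δ ^ 2) ≤ TB := by
      have := Finset.single_le_sum (f := fun j => 2 / (γ j * δ ^ 2)) (fun j _ => (hterm j).le)
        (Finset.mem_univ i)
      try simp only at this
      linarith
    have h2 : 0 < γ i * δ ^ 2 := mul_pos (hγ i) hδ2
    rw [div_le_iff₀ h2] at h1
    linarith
  set μ : ℝ := δ ^ 2 / (1000 * (TB + 1)) with hμdef
  have hμ0 : 0 < μ := by positivity
  have hμe : μ * (1000 * (TB + 1)) = δ ^ 2 := by
    rw [hμdef]; field_simp
  have hxm2 := xm_lt hxm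
  refine ⟨μ, hμ0, fun s => {p | ∀ j, (1 < sg (s j) * p.1 j ∧ sg (s j) * p.1 j < 2) ∧
    (1/2 < sg (s j) * p.2 j ∧ sg (s j) * p.2 j < 2)}, ?_, ?_⟩
  · intro s
    refine ⟨⟨(fun j => sg (s j) * (3/2), fun j => sg (s j) * (3/2)), ?_⟩, ?_, ?_⟩
    · intro j
      simp only [← mul_assoc, sg_sq]
      norm_num
    · simp only [Set.ofPred_forall]
      refine isOpen_iInter_of_finite fun j => ?_
      have c1 : Continuous fun p : (Fin n → ℝ) × (Fin n → ℝ) => sg (s j) * p.1 j := by fun_prop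
      have c2 : Continuous fun p : (Fin n → ℝ) × (Fin n → ℝ) => sg (s j) * p.2 j := by fun_prop
      exact ((isOpen_lt continuous_const c1).inter (isOpen_lt c1 continuous_const)).inter
        ((isOpen_lt continuous_const c2).inter (isOpen_lt c2 continuous_const))
    · intro p hp
      refine ⟨fun j => ?_, fun j => ?_⟩
      · have := hp j
        cases hs : s j <;> simp [hs, sg] at this ⊢ <;> linarith [this.1.1]
      · have := hp j
        cases hs : s j <;> simp [hs, sg] at this ⊢ <;>
          refine ⟨⟨?_, ?_⟩, ?_, ?_⟩ <;> linarith [this.1.1, this.1.2, this.2.1, this.2.2]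
  · intro γ' hγ' x y hsol hmem
    obtain ⟨s0, hs0⟩ := Set.mem_iUnion.1 hmem
    have hs0' : ∀ j, (1 < sg (s0 j) * x 0 j ∧ sg (s0 j) * x 0 j < 2) ∧
      (1/2 < sg (s0 j) * y 0 j ∧ sg (s0 j) * y 0 j < 2) := hs0
    have hsq : ∀ j (z : ℝ), z = sg (s0 j) * (sg (s0 j) * z) := fun j z => by
      rw [← mul_assoc, sg_sq, one_mul]
    have bx : ∀ j, ∀ t, 0 ≤ t → -3 ≤ x t j ∧ x t j ≤ 3 := fun j =>
      box_X (u := fun t => x t j) (w := fun t => MM (y t j)) (hγ j)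
        (fun t _ => ⟨MM_ge _, MM_le _⟩)
        (fun t ht => by
          have := (hsol j t ht).1
          convert this using 1
          unfold hh MM gcub; ring)
        (by
          have := hs0' j
          try simp only
          rw [hsq j (x 0 j)]
          exact sg_box _ ⟨by linarith, by linarith⟩)
    have hby : ∀ j, ∀ t, 0 ≤ t → -3 ≤ y t j ∧ y t j ≤ 3 := fun j =>
      box_X (u := fun t => y t j) (w := fun t => 6 * Q (x t) j - 3) (hγ' j).1
        (fun t _ => by
          have := hQ.2.1 (x t) j
          exact ⟨by linarith [this.1], by linarith [this.2]⟩)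
        (fun t ht => by
          have := (hsol j t ht).2
          convert this using 1
          unfold hh gcub; ring)
        (by
          have := hs0' j
          try simp only
          rw [hsq j (y 0 j)]
          exact sg_box _ ⟨by linarith, by linarith⟩)
    have hμ1 : ∀ j, 21 * γ' j * TB ≤ δ ^ 2 / 3 := fun j => by
      have h1 : γ' j * TB ≤ μ * TB := mul_le_mul_of_nonneg_right (hγ' j).2.le hTB0.le
      nlinarith
    have hδ3 : δ ^ 2 ≤ 1 / 4 := by nlinarith
    have hμ2 : ∀ j, γ' j * (21 * (1 + 11 * TB)) ≤ 11 / 12 := fun j => by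
      have h1 : γ' j * (21 * (1 + 11 * TB)) ≤ μ * (21 * (1 + 11 * TB)) :=
        mul_le_mul_of_nonneg_right (hγ' j).2.le (by positivity)
      nlinarith [mul_pos hμ0 hTB0]
    have he0 : ∀ j, 0 ≤ 21 * γ' j * TB := fun j => by have := (hγ' j).1; positivity
    have he : ∀ j, 21 * γ' j * TB ≤ 1 / 12 := fun j => by linarith [hμ1 j]
    have sys := fun s => mkSys hQ hγ (fun i => (hγ' i).1) hδ hδ1 hδQ hsol bx hby s
    have hfixed : ∀ s a, 0 ≤ a → (∀ j, 1 ≤ sg (s j) * x a j ∧ 1/3 - 21 * γ' j * TB ≤ sg (s j) * y a j) →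
        f s = s → ∀ t, a ≤ t → ∀ j, 1 ≤ sg (s j) * x t j ∧ 1/3 - 21 * γ' j * TB ≤ sg (s j) * y t j := by
      intro s a ha hst hfs t ht j
      have := (sys s).stageA a t ha (fun j => 21 * γ' j * TB) (fun _ => 0)
        (fun j _ => (hst j).1) (fun j _ => (hst j).2) he (fun _ => le_refl _)
        (fun j => by have := (hγ' j).1; linarith) (fun j => by simpa using he0 j)
        (fun z hz k hk => absurd (congrFun hfs k) hk) t ⟨ht, le_refl t⟩ j (by simp [hfs])
      simpa using this
    have hit := itin_exists x f (fun s a => ∀ j, 1 ≤ sg (s j) * x a j ∧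
      1/3 - 21 * γ' j * TB ≤ sg (s j) * y a j) ?_ ?_ s0 ?_
    · refine ⟨⟨_, hit⟩, fun σ hσ τ => ?_⟩
      rw [itin_unique hσ hit]
      exact Function.iterate_succ_apply' f τ s0
    · intro s a ha hst
      by_cases hfs : f s = s
      · have hall := hfixed s a ha hst hfs
        have hall' : ∀ t, a ≤ t → Sdisc n (x t) = s ∧ x t ∉ Bzero n := fun t ht =>
          disc_of (fun j => by linarith [(hall t ht j).1])
        refine ⟨a + 1/2, a + 1, by linarith, by linarith, le_refl _, ?_, ?_, ?_⟩
        · rw [hfs]; exact hall (a + 1) (by linarith)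
        · intro t ht; exact hall' t ht.1
        · rw [hfs]; intro t ht; exact hall' t (by linarith [ht.1])
      · obtain ⟨i, hi⟩ := Function.ne_iff.1 hfs
        have hi' : ∀ j, f s j ≠ s j ↔ j = i := by
          intro j
          constructor
          · intro hj
            have h1 := hf s
            unfold hammingDist at h1
            exact Finset.card_le_one.1 h1 j (by simpa using fun h => hj h.symm) i
              (by simpa using fun h => hi h.symm)
          · rintro rfl; exact hi
        have hfi : f s i = !(s i) := by
          revert hi; cases f s i <;> cases s i <;> simp
        have hfj : ∀ j, j ≠ i → f s j = s j := fun j hj => by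
          by_contra hcon; exact hj ((hi' j).1 hcon)
        obtain ⟨b, c, hab, hbc, hac, h1, h2, h3, h4, h5⟩ := (sys s).step a ha i hi' TB hTB0 (hTB i)
          hμ1 hμ2 (fun j => (hst j).1) (fun j => (hst j).2)
        refine ⟨b, c, hab, hbc, hac, ?_, ?_, ?_⟩
        · intro j
          by_cases hj : j = i
          · rw [hj, hfi, sg_not]
            have := he0 i
            constructor <;> linarith
          · rw [hfj j hj]; exact h5 j hj
        · intro t ht; exact disc_of (h1 t ht)
        · intro t ht
          refine disc_of (fun j => ?_)
          by_cases hj : j = i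
          · rw [hj, hfi, sg_not]
            linarith [(h2 t ht).1]
          · rw [hfj j hj]; exact (h2 t ht).2 j hj
    · intro s a ha hst hfs t ht
      exact disc_of (fun j => by linarith [(hfixed s a ha hst hfs t ht j).1])
    · intro j
      have := hs0' j
      have := he0 j
      constructor <;> linarith
end
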